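/- arXiv:math/0309360 — 2 statements merged into one kernel-verified Lean document; each statement's English description precedes it below -/
import Mathlib

section
/- In the tower construction, for every n ≥ 2: Dₙ[X′ₙ] = Bₙ, the elements 1/X′ₙ and Y·X′ₙ lie in Dₙ, and the localization (Dₙ)_{𝓜ₙ} equals Dₙ[1/(Y·X′ₙ)] = Aₙ, where 𝓜ₙ := Mₙ ∩ Dₙ. -/
/- Preamble: the tower construction of Fontana–Kabbaj (Example 3.1).
All rings are realized as subsets/subrings of one ambient field `Amb k0 r`:
the rational function field over `k0` in the indeterminates
`X₁, X₂, …` (indexed by `ℕ`), `Y`, and `Z₁, …, Z_{r-1}`. -/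

noncomputable section

open Polynomial

/-- Index type for the indeterminates: `Sum.inl n` is `Xₙ`, `Sum.inr (Sum.inl ())` is `Y`,
and `Sum.inr (Sum.inr i)` is `Z_{i+1}`. -/
abbrev TowerVars (r : ℕ) : Type := ℕ ⊕ (Unit ⊕ Fin (r - 1))

/-- The ambient field: the fraction field of the polynomial ring over `k0` in all the
indeterminates. -/
abbrev Amb (k0 : Type) [Field k0] (r : ℕ) : Type :=
  FractionRing (MvPolynomial (TowerVars r) k0)

variable (k0 : Type) [Field k0] (r : ℕ)

/-- The indeterminate `Xₙ` as an element of the ambient field. -/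
def ambX (n : ℕ) : Amb k0 r :=
  algebraMap (MvPolynomial (TowerVars r) k0) (Amb k0 r) (MvPolynomial.X (Sum.inl n))

/-- The indeterminate `Y` as an element of the ambient field. -/
def ambY : Amb k0 r :=
  algebraMap (MvPolynomial (TowerVars r) k0) (Amb k0 r) (MvPolynomial.X (Sum.inr (Sum.inl ())))

/-- The indeterminates `Z₁, …, Z_{r-1}` as elements of the ambient field. -/
def ambZ (i : Fin (r - 1)) : Amb k0 r :=
  algebraMap (MvPolynomial (TowerVars r) k0) (Amb k0 r) (MvPolynomial.X (Sum.inr (Sum.inr i)))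

/-- The image of the base field `k0` in the ambient field. -/
def baseSet : Set (Amb k0 r) :=
  Set.range fun c : k0 => algebraMap (MvPolynomial (TowerVars r) k0) (Amb k0 r) (MvPolynomial.C c)

/-- `kₙ := k0(X₁, …, Xₙ)` as a subfield of the ambient field. -/
def kfld (n : ℕ) : Subfield (Amb k0 r) :=
  Subfield.closure (baseSet k0 r ∪ {x | ∃ i, 1 ≤ i ∧ i ≤ n ∧ x = ambX k0 r i})

/-- `Fₙ := kₙ(Z₁, …, Z_{r-1})`. -/
def Ffld (n : ℕ) : Subfield (Amb k0 r) :=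
  Subfield.closure (↑(kfld k0 r n) ∪ Set.range (ambZ k0 r))

/-- `Kₙ := Fₙ(Y)`. -/
def Kfld (n : ℕ) : Subfield (Amb k0 r) :=
  Subfield.closure (↑(Ffld k0 r n) ∪ {ambY k0 r})

/-- The polynomial ring `Fₙ[Y]` as a subring of the ambient field. -/
def polyRing (n : ℕ) : Subring (Amb k0 r) :=
  Subring.closure (↑(Ffld k0 r n) ∪ {ambY k0 r})

/-- `Vₙ := Fₙ[Y]_{(Y)}`, the localization of `Fₙ[Y]` at the prime `(Y)`, as a subset of
the ambient field. -/
def Vset (n : ℕ) : Set (Amb k0 r) :=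
  {x | ∃ f ∈ polyRing k0 r n, ∃ g ∈ polyRing k0 r n,
    (¬ ∃ h ∈ polyRing k0 r n, g = ambY k0 r * h) ∧ x = f / g}

/-- `Mₙ := Y·Fₙ[Y]_{(Y)}`, the maximal ideal of `Vₙ`. -/
def Mset (n : ℕ) : Set (Amb k0 r) :=
  {x | ∃ v ∈ Vset k0 r n, x = ambY k0 r * v}

/-- `Aₙ := kₙ + Mₙ`. -/
def Aset (n : ℕ) : Set (Amb k0 r) :=
  {x | ∃ c ∈ kfld k0 r n, ∃ m ∈ Mset k0 r n, x = c + m}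

/-- `k := ⋃ₙ kₙ` as a subset of the ambient field. -/
def kfldU : Set (Amb k0 r) := ⋃ n, (kfld k0 r n : Set (Amb k0 r))

/-- `F := k(Z₁, …, Z_{r-1}) = ⋃ₙ Fₙ`. -/
def FfldU : Subfield (Amb k0 r) :=
  Subfield.closure (kfldU k0 r ∪ Set.range (ambZ k0 r))

/-- `K := F(Y) = ⋃ₙ Kₙ`. -/
def KfldU : Subfield (Amb k0 r) :=
  Subfield.closure (↑(FfldU k0 r) ∪ {ambY k0 r})

/-- The polynomial ring `F[Y]`. -/
def polyRingU : Subring (Amb k0 r) :=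
  Subring.closure (↑(FfldU k0 r) ∪ {ambY k0 r})

/-- `V := F[Y]_{(Y)}`. -/
def VsetU : Set (Amb k0 r) :=
  {x | ∃ f ∈ polyRingU k0 r, ∃ g ∈ polyRingU k0 r,
    (¬ ∃ h ∈ polyRingU k0 r, g = ambY k0 r * h) ∧ x = f / g}

/-- `M := Y·F[Y]_{(Y)} = ⋃ₙ Mₙ`. -/
def MsetU : Set (Amb k0 r) :=
  {x | ∃ v ∈ VsetU k0 r, x = ambY k0 r * v}

/-- `A := k + M = ⋃ₙ Aₙ`. -/
def AsetU : Set (Amb k0 r) :=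
  {x | ∃ c ∈ kfldU k0 r, ∃ m ∈ MsetU k0 r, x = c + m}

/-- `X′ₙ := (1 + Y·Xₙ)/Y`. -/
def ambX' (n : ℕ) : Amb k0 r :=
  (1 + ambY k0 r * ambX k0 r n) / ambY k0 r

/-- `1` belongs to the ideal of `W` generated by the coefficients of `g`, where `W` is a
subring (given as a subset `S`) of the ambient field. -/
def unitContent (S : Set (Amb k0 r)) (g : Polynomial (Amb k0 r)) : Prop :=
  ∃ (t : Finset ℕ) (u : ℕ → Amb k0 r), (∀ i ∈ t, u i ∈ S) ∧ ∑ i ∈ t, u i * g.coeff i = 1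

/-- The Nagata ring `W(T)` of a subring `W ⊆ Amb k0 r` (given as a subset `S`) in the
"variable" `T`: all fractions `f(T)/g(T)` with `f, g ∈ W[T]` and the coefficients of `g`
generating the unit ideal of `W`.  (When `T` is transcendental over `W` this is the usual
Nagata ring.) -/
def nagataSet (S : Set (Amb k0 r)) (T : Amb k0 r) : Set (Amb k0 r) :=
  {x | ∃ f g : Polynomial (Amb k0 r), (∀ i, f.coeff i ∈ S) ∧ (∀ i, g.coeff i ∈ S) ∧
    unitContent k0 r S g ∧ x = f.eval T / g.eval T}

/-- The valuation overrings of a ring `D` (given as a subset) inside a subfield `L` of the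
ambient field: subrings `W` with `D ⊆ W ⊆ L` such that for every `x ∈ L`, `x ∈ W` or
`x⁻¹ ∈ W`. -/
def valOverringsIn (D : Set (Amb k0 r)) (L : Subfield (Amb k0 r)) : Set (Subring (Amb k0 r)) :=
  {W | D ⊆ ↑W ∧ (W : Set (Amb k0 r)) ⊆ (L : Set (Amb k0 r)) ∧ ∀ x ∈ L, x ∈ W ∨ x⁻¹ ∈ W}

/-- The Kronecker function ring `Kr_{L(T)}(D, b) = ⋂ {W(T) : W a valuation overring of `D`
in `L`}`, realized as a subset of the ambient field. -/
def krSet (D : Set (Amb k0 r)) (L : Subfield (Amb k0 r)) (T : Amb k0 r) : Set (Amb k0 r) :=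
  ⋂ W ∈ valOverringsIn k0 r D L, nagataSet k0 r (↑W) T

/-- The tower `Dₙ`: `D₁ := A₁` and `Dₙ := Bₙ ∩ Aₙ` for `n ≥ 2`, where
`Bₙ := Kr_{K_{n-1}(X′ₙ)}(D_{n-1}, b)`.  (The value at `0` is junk, set to `D₁`.) -/
def Dset : ℕ → Set (Amb k0 r)
  | 0 => Aset k0 r 1
  | 1 => Aset k0 r 1
  | n + 2 => krSet k0 r (Dset (n + 1)) (Kfld k0 r (n + 1)) (ambX' k0 r (n + 2)) ∩ Aset k0 r (n + 2)

/-- `Bₙ := Kr_{K_{n-1}(X′ₙ)}(D_{n-1}, b)` (meaningful for `n ≥ 2`). -/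
def Bset (n : ℕ) : Set (Amb k0 r) :=
  krSet k0 r (Dset k0 r (n - 1)) (Kfld k0 r (n - 1)) (ambX' k0 r n)

/-- `𝓜ₙ := Mₙ ∩ Dₙ`. -/
def MMset (n : ℕ) : Set (Amb k0 r) := Mset k0 r n ∩ Dset k0 r n

/-- `D := ⋃__{n ≥ 1} Dₙ`. -/
def DsetU : Set (Amb k0 r) := ⋃ n, Dset k0 r n

/-- `𝓜 := ⋃_{n ≥ 2} 𝓜ₙ`. -/
def MMsetU : Set (Amb k0 r) := ⋃ n, MMset k0 r (n + 2)

/-- The localization `D_m = {a/b : a, b ∈ D, b ∉ m}` of a subring `D` of the ambient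
field (given as a subset) at (the complement of) a subset `m`. -/
def locAt (D m : Set (Amb k0 r)) : Set (Amb k0 r) :=
  {x | ∃ a ∈ D, ∃ b ∈ D, b ∉ m ∧ x = a / b}

/-- The quotient field, inside the ambient field, of a subring given as a subset. -/
def qfSet (D : Set (Amb k0 r)) : Set (Amb k0 r) :=
  {x | ∃ a ∈ D, ∃ b ∈ D, b ≠ 0 ∧ x = a / b}

/-- The nonunits of a subring of the ambient field, given as a subset: in a local
subring of a field these form the maximal ideal. -/
def nonunitsIn (S : Set (Amb k0 r)) : Set (Amb k0 r) :=
  {x | x ∈ S ∧ (x = 0 ∨ x⁻¹ ∉ S)}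

/-- A subring `A` of the ambient field is a pseudo-valuation domain: it is local, and its
maximal ideal (= set of nonunits) is also the maximal ideal of some valuation overring of
`A` in its quotient field. -/
def IsPVDSub (A : Subring (Amb k0 r)) : Prop :=
  IsLocalRing ↥A ∧
  ∃ W : Subring (Amb k0 r), (A : Set (Amb k0 r)) ⊆ ↑W ∧
    (W : Set (Amb k0 r)) ⊆ qfSet k0 r ↑A ∧
    (∀ x ∈ qfSet k0 r (A : Set (Amb k0 r)), x ∈ W ∨ x⁻¹ ∈ W) ∧
    nonunitsIn k0 r ↑A = nonunitsIn k0 r ↑W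

/-- The valuative dimension of a subring of the ambient field: the supremum of the Krull
dimensions of its valuation overrings (in its quotient field). -/
def subValuativeDim (A : Subring (Amb k0 r)) : WithBot ℕ∞ :=
  ⨆ W : {W : Subring (Amb k0 r) // (A : Set (Amb k0 r)) ⊆ ↑W ∧
      (W : Set (Amb k0 r)) ⊆ qfSet k0 r ↑A ∧
      ∀ x ∈ qfSet k0 r (A : Set (Amb k0 r)), x ∈ W ∨ x⁻¹ ∈ W},
    ringKrullDim ↥(W : Subring (Amb k0 r))


/-- `1` belongs to the ideal generated by the coefficients of a multivariable polynomial
`g` in the subring given by the subset `S`. -/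
def mvUnitContent (S : Set (Amb k0 r)) (g : MvPolynomial ℕ (Amb k0 r)) : Prop :=
  ∃ (t : Finset (ℕ →₀ ℕ)) (u : (ℕ →₀ ℕ) → Amb k0 r),
    (∀ m ∈ t, u m ∈ S) ∧ ∑ m ∈ t, u m * MvPolynomial.coeff m g = 1

/-- The Nagata ring `W(T₀, T₁, …)` of a subring `W` of the ambient field (given as a
subset `S`) in countably many "variables" `T j`: all fractions `f(T)/g(T)` with
`f, g ∈ W[T₀, T₁, …]` and the coefficients of `g` generating the unit ideal of `W`. -/
def nagataSetMv (S : Set (Amb k0 r)) (T : ℕ → Amb k0 r) : Set (Amb k0 r) :=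
  {x | ∃ f g : MvPolynomial ℕ (Amb k0 r),
    (∀ m, MvPolynomial.coeff m f ∈ S) ∧ (∀ m, MvPolynomial.coeff m g ∈ S) ∧
    mvUnitContent k0 r S g ∧ x = MvPolynomial.eval T f / MvPolynomial.eval T g}

/-- A subring `S` of the ambient field is an *essential* domain: `S` is the intersection
of a family of localizations `S_p` at primes `p ∈ Δ`, each of which is a valuation domain
(with quotient field the quotient field of `S`). -/
def IsEssentialSub (S : Subring (Amb k0 r)) : Prop :=
  ∃ Δ : Set (Ideal ↥S),
    (∀ p ∈ Δ, p.IsPrime) ∧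
    (∀ p ∈ Δ, ∀ x ∈ qfSet k0 r (S : Set (Amb k0 r)),
      x ∈ locAt k0 r ↑S (Subtype.val '' (p : Set ↥S)) ∨
      x⁻¹ ∈ locAt k0 r ↑S (Subtype.val '' (p : Set ↥S))) ∧
    (S : Set (Amb k0 r)) = ⋂ p ∈ Δ, locAt k0 r ↑S (Subtype.val '' (p : Set ↥S))

end

/-! Put `u := Y·X′ₙ = 1 + Y·Xₙ`, a unit of `Aₙ`. High powers of `Y` multiply any given element of
`Kₙ` into `Aₙ`, and also into `Bₙ`: by induction they multiply the finitely many coefficients of a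
fraction in `X′ₙ` over `Kₙ₋₁` into `Dₙ₋₁`, hence into all valuation overrings of `Dₙ₋₁` at once.
So `X′ₙ⁻ᵐ = u⁻ᵐYᵐ` multiplies a given element of `Bₙ` into `Bₙ ∩ Aₙ = Dₙ` for large `m`, and
`uᵐ = X′ₙᵐYᵐ` does so for a given element of `Aₙ`. This gives `Bₙ = Dₙ[X′ₙ]` and `Aₙ = Dₙ[1/u]`,
and, as `Aₙ` is local with maximal ideal `Mₙ`, also `Aₙ = (Dₙ)_{𝓜ₙ}`. -/

section FractionSubring

variable {P Q : Type*} [CommRing P] [Field Q]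

/-- The image in the field `Q` of the localization of `P` at those elements of `M` which `φ` does
not send to `0`. Both the localizations `E[y]_{(y)}` and the Nagata rings are of this shape. -/
def fractionSubring (φ : P →+* Q) (M : Submonoid P) : Subring Q where
  carrier := {x | ∃ a, ∃ b ∈ M, φ b ≠ 0 ∧ x = φ a / φ b}
  zero_mem' := ⟨0, 1, one_mem M, by simp, by simp⟩
  one_mem' := ⟨1, 1, one_mem M, by simp, by simp⟩
  add_mem' := by
    rintro _ _ ⟨a, b, hb, hb0, rfl⟩ ⟨c, d, hd, hd0, rfl⟩
    refine ⟨a * d + b * c, b * d, mul_mem hb hd, ?_, ?_⟩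
    · simpa only [map_mul] using mul_ne_zero hb0 hd0
    · simp only [map_add, map_mul, div_add_div _ _ hb0 hd0]
  mul_mem' := by
    rintro _ _ ⟨a, b, hb, hb0, rfl⟩ ⟨c, d, hd, hd0, rfl⟩
    refine ⟨a * c, b * d, mul_mem hb hd, ?_, ?_⟩
    · simpa only [map_mul] using mul_ne_zero hb0 hd0
    · simp only [map_mul, div_mul_div_comm]
  neg_mem' := by
    rintro _ ⟨a, b, hb, hb0, rfl⟩
    exact ⟨-a, b, hb, hb0, by rw [map_neg, neg_div]⟩

variable {φ : P →+* Q} {M : Submonoid P}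

theorem mem_fractionSubring {x : Q} :
    x ∈ fractionSubring φ M ↔ ∃ a, ∃ b ∈ M, φ b ≠ 0 ∧ x = φ a / φ b :=
  Iff.rfl

theorem map_mem_fractionSubring (a : P) : φ a ∈ fractionSubring φ M :=
  ⟨a, 1, one_mem M, by simp, by simp⟩

theorem inv_map_mem_fractionSubring {b : P} (hb : b ∈ M) : (φ b)⁻¹ ∈ fractionSubring φ M := by
  by_cases hb0 : φ b = 0
  · simp only [hb0, inv_zero, zero_mem]
  · exact ⟨1, b, hb, hb0, by simp⟩

end FractionSubring

section Adjoin

open Polynomial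

variable {Q : Type*} [Field Q] {S D R : Subring Q} {E : Subfield Q} {s t x y : Q}

theorem forall_coeff_mem_iff_exists_map {f : Q[X]} :
    (∀ i, f.coeff i ∈ S) ↔ ∃ F : S[X], F.map (algebraMap S Q) = f := by
  rw [← mem_lifts, lifts_iff_coeff_lifts]
  exact forall_congr' fun i => ⟨fun hi => ⟨⟨_, hi⟩, rfl⟩, fun ⟨a, ha⟩ => ha ▸ a.2⟩

theorem setOf_eval_eq_adjoin (S : Subring Q) (t : Q) :
    {x | ∃ f : Q[X], (∀ i, f.coeff i ∈ (S : Set Q)) ∧ x = f.eval t} =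
      (Algebra.adjoin S {t} : Set Q) := by
  ext x
  simp only [Set.mem_ofPred_eq, forall_coeff_mem_iff_exists_map, SetLike.mem_coe,
    Algebra.adjoin_singleton_eq_range_aeval, AlgHom.mem_range]
  constructor
  · rintro ⟨_, ⟨F, rfl⟩, rfl⟩
    exact ⟨F, (eval_map_algebraMap F t).symm⟩
  · rintro ⟨F, rfl⟩
    exact ⟨_, ⟨F, rfl⟩, (eval_map_algebraMap F t).symm⟩

theorem transcendental_of_le (hSE : S ≤ E.toSubring) (ht : Transcendental E t) :
    Transcendental S t :=
  Transcendental.of_ringHom_of_comp_eq (Subring.inclusion hSE) (RingHom.id Q) ht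
    (Set.inclusion_injective hSE) rfl

theorem mem_subringClosure_insert_iff :
    x ∈ Subring.closure ((E : Set Q) ∪ {t}) ↔ ∃ f : E[X], aeval t f = x := by
  have range_eq : Set.range (algebraMap E Q) = E := Subtype.range_coe
  rw [← range_eq, ← Algebra.adjoin_eq_ring_closure, Subalgebra.mem_toSubring,
    Algebra.adjoin_singleton_eq_range_aeval, AlgHom.mem_range]

theorem mem_subfieldClosure_insert_iff :
    x ∈ Subfield.closure ((E : Set Q) ∪ {t}) ↔ ∃ f g : E[X], x = aeval t f / aeval t g := by
  have range_eq : Set.range (algebraMap E Q) = E := Subtype.range_coe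
  rw [← IntermediateField.mem_adjoin_simple_iff, ← range_eq, ← IntermediateField.adjoin_toSubfield,
    IntermediateField.mem_toSubfield]

theorem coe_adjoin_inv_eq_of_pow_mul_mem (hDR : D ≤ R) (hs : s ≠ 0) (hsR : s⁻¹ ∈ R)
    (hpow : ∀ x ∈ R, ∃ m : ℕ, s ^ m * x ∈ D) : (Algebra.adjoin D {s⁻¹} : Set Q) = R := by
  refine subset_antisymm (fun x hx => ?_) (fun x hx => ?_)
  · induction hx using Algebra.adjoin_induction with
    | mem x hx => rwa [Set.mem_singleton_iff.1 hx]
    | algebraMap d => exact hDR d.2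
    | add x y _ _ hx hy => exact add_mem hx hy
    | mul x y _ _ hx hy => exact mul_mem hx hy
  · obtain ⟨m, hm⟩ := hpow x hx
    have hsplit : x = (s ^ m * x) * s⁻¹ ^ m := by
      rw [mul_right_comm, ← mul_pow, mul_inv_cancel₀ hs, one_pow, one_mul]
    rw [hsplit]
    exact mul_mem (Subalgebra.algebraMap_mem _ (⟨_, hm⟩ : D))
      (pow_mem (Algebra.self_mem_adjoin_singleton D _) m)

theorem eventually_pow_mul_mem (hy : y ∈ S) {m : ℕ} (h : y ^ m * x ∈ S) :
    ∀ᶠ n in Filter.atTop, y ^ n * x ∈ S := by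
  filter_upwards [Filter.eventually_ge_atTop m] with n hmn
  rw [← Nat.sub_add_cancel hmn, pow_add, mul_assoc]
  exact mul_mem (pow_mem hy _) h

end Adjoin

noncomputable section RegularAtZero

open Polynomial

variable {Q : Type*} [Field Q]

/-- The localization `E[y]_{(y)}` inside `Q`: the rational functions in `y` over `E` which are
regular at `y = 0`. -/
def regularAtZero (E : Subfield Q) (y : Q) : Subring Q :=
  fractionSubring (aeval y : E[X] →ₐ[E] Q).toRingHom
    ((nonZeroDivisors E).comap (constantCoeff : E[X] →+* E))

variable {E k : Subfield Q} {c v x y : Q}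

theorem mem_regularAtZero : x ∈ regularAtZero E y ↔
    ∃ f g : E[X], g.coeff 0 ≠ 0 ∧ aeval y g ≠ 0 ∧ x = aeval y f / aeval y g := by
  simp [regularAtZero, mem_fractionSubring]

theorem aeval_mem_regularAtZero (f : E[X]) : aeval y f ∈ regularAtZero E y :=
  map_mem_fractionSubring f

theorem subfield_le_regularAtZero : E.toSubring ≤ regularAtZero E y := fun c hc => by
  have hC := aeval_mem_regularAtZero (y := y) (C ⟨c, hc⟩ : E[X])
  rw [aeval_C] at hC
  exact hC

theorem self_mem_regularAtZero : y ∈ regularAtZero E y := by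
  simpa using aeval_mem_regularAtZero (y := y) (X : E[X])

theorem mem_regularAtZero_iff_exists_mem_closure (hy : Transcendental E y) :
    x ∈ regularAtZero E y ↔ ∃ f ∈ Subring.closure ((E : Set Q) ∪ {y}),
      ∃ g ∈ Subring.closure ((E : Set Q) ∪ {y}),
        (¬ ∃ h ∈ Subring.closure ((E : Set Q) ∪ {y}), g = y * h) ∧ x = f / g := by
  simp only [mem_regularAtZero, mem_subringClosure_insert_iff]
  constructor
  · rintro ⟨f, g, hg0, -, rfl⟩
    refine ⟨_, ⟨f, rfl⟩, _, ⟨g, rfl⟩, ?_, rfl⟩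
    rintro ⟨_, ⟨h, rfl⟩, hgh⟩
    have hgX : g = X * h := transcendental_iff_injective.1 hy (by rw [hgh, map_mul, aeval_X])
    exact hg0 (by rw [hgX, coeff_X_mul_zero])
  · rintro ⟨_, ⟨f, rfl⟩, _, ⟨g, rfl⟩, hyg, rfl⟩
    refine ⟨f, g, fun hg0 => ?_, fun hg => ?_, rfl⟩
    · obtain ⟨h, rfl⟩ := X_dvd_iff.2 hg0
      exact hyg ⟨_, ⟨h, rfl⟩, by rw [map_mul, aeval_X]⟩
    · exact hyg ⟨0, ⟨0, map_zero _⟩, by rw [hg, mul_zero]⟩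

theorem regularAtZero_le_closure :
    regularAtZero E y ≤ (Subfield.closure ((E : Set Q) ∪ {y})).toSubring := fun x hx => by
  obtain ⟨f, g, -, -, rfl⟩ := mem_regularAtZero.1 hx
  exact mem_subfieldClosure_insert_iff.2 ⟨f, g, rfl⟩

theorem inv_notMem_regularAtZero (hy : Transcendental E y) : y⁻¹ ∉ regularAtZero E y := by
  rw [mem_regularAtZero]
  rintro ⟨f, g, hg0, hg, hfg⟩
  have hy0 : y ≠ 0 := fun hzero => hy (hzero ▸ isAlgebraic_zero)
  have hgf : aeval y g = aeval y (X * f) := by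
    rw [map_mul, aeval_X]
    field_simp at hfg
    exact hfg
  rw [transcendental_iff_injective.1 hy hgf] at hg0
  simp at hg0

theorem add_mul_ne_zero_and_inv_mem_regularAtZero (hy : Transcendental E y) (hc : c ∈ E)
    (hc0 : c ≠ 0) (hv : v ∈ regularAtZero E y) :
    c + y * v ≠ 0 ∧ (c + y * v)⁻¹ ∈ regularAtZero E y := by
  obtain ⟨f, g, hg0, hg, rfl⟩ := mem_regularAtZero.1 hv
  set h : E[X] := C ⟨c, hc⟩ * g + X * f with h_def
  have hh0 : h.coeff 0 ≠ 0 := by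
    have hcE : (⟨c, hc⟩ : E) ≠ 0 := fun hzero => hc0 (congrArg Subtype.val hzero)
    simpa [h_def] using And.intro hcE hg0
  have hh : aeval y h ≠ 0 := fun hzero => hh0 <| by
    rw [(transcendental_iff.1 hy) h hzero, coeff_zero]
  have h_eq : c + y * (aeval y f / aeval y g) = aeval y h / aeval y g := by
    have hC : aeval y (C ⟨c, hc⟩ : E[X]) = c := aeval_C y _
    rw [h_def, map_add, map_mul, map_mul, aeval_X, hC]
    field_simp
  rw [h_eq]
  exact ⟨div_ne_zero hh hg, mem_regularAtZero.2 ⟨g, h, hh0, hh, inv_div _ _⟩⟩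

theorem exists_pow_mul_mem_regularAtZero (hx : x ∈ Subfield.closure ((E : Set Q) ∪ {y})) :
    ∃ m : ℕ, y ^ m * x ∈ regularAtZero E y := by
  obtain ⟨f, g, rfl⟩ := mem_subfieldClosure_insert_iff.1 hx
  by_cases hg : aeval y g = 0
  · exact ⟨0, by simp [hg]⟩
  have hg0 : g ≠ 0 := by
    rintro rfl
    simp at hg
  obtain ⟨m, q, hq, rfl⟩ := WfDvdMonoid.max_power_factor hg0 irreducible_X
  have hy : y ^ m ≠ 0 ∧ aeval y q ≠ 0 := by simpa [not_or] using hg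
  refine ⟨m, mem_regularAtZero.2 ⟨f, q, mt X_dvd_iff.2 hq, hy.2, ?_⟩⟩
  rw [map_mul, map_pow, aeval_X, mul_div_assoc', mul_div_mul_left _ _ hy.1]

/-- The ring `k + y E[y]_{(y)}` inside `Q`. -/
def constAddMaximal (k E : Subfield Q) (hkE : k ≤ E) (y : Q) : Subring Q where
  carrier := {x | ∃ c ∈ k, ∃ v ∈ regularAtZero E y, x = c + y * v}
  zero_mem' := ⟨0, zero_mem _, 0, zero_mem _, by simp⟩
  one_mem' := ⟨1, one_mem _, 0, zero_mem _, by simp⟩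
  add_mem' := by
    rintro _ _ ⟨c, hc, v, hv, rfl⟩ ⟨d, hd, w, hw, rfl⟩
    exact ⟨c + d, add_mem hc hd, v + w, add_mem hv hw, by ring⟩
  mul_mem' := by
    rintro _ _ ⟨c, hc, v, hv, rfl⟩ ⟨d, hd, w, hw, rfl⟩
    have hc' := subfield_le_regularAtZero (y := y) (hkE hc)
    have hd' := subfield_le_regularAtZero (y := y) (hkE hd)
    refine ⟨c * d, mul_mem hc hd, c * w + d * v + y * (v * w), ?_, by ring⟩
    exact add_mem (add_mem (mul_mem hc' hw) (mul_mem hd' hv))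
      (mul_mem self_mem_regularAtZero (mul_mem hv hw))
  neg_mem' := by
    rintro _ ⟨c, hc, v, hv, rfl⟩
    exact ⟨-c, neg_mem hc, -v, neg_mem hv, by ring⟩

variable {hkE : k ≤ E}

theorem mem_constAddMaximal :
    x ∈ constAddMaximal k E hkE y ↔ ∃ c ∈ k, ∃ v ∈ regularAtZero E y, x = c + y * v :=
  Iff.rfl

theorem constAddMaximal_le_closure :
    constAddMaximal k E hkE y ≤ (Subfield.closure ((E : Set Q) ∪ {y})).toSubring := by
  rintro _ ⟨c, hc, v, hv, rfl⟩
  exact regularAtZero_le_closure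
    (add_mem (subfield_le_regularAtZero (hkE hc)) (mul_mem self_mem_regularAtZero hv))

theorem mul_mem_constAddMaximal (hv : v ∈ regularAtZero E y) :
    y * v ∈ constAddMaximal k E hkE y :=
  ⟨0, zero_mem _, v, hv, (zero_add _).symm⟩

theorem self_mem_constAddMaximal : y ∈ constAddMaximal k E hkE y := by
  simpa using mul_mem_constAddMaximal (k := k) (hkE := hkE) (one_mem (regularAtZero E y))

theorem inv_add_mul_mem_constAddMaximal (hy : Transcendental E y) (hc : c ∈ k) (hc0 : c ≠ 0)
    (hv : v ∈ regularAtZero E y) : (c + y * v)⁻¹ ∈ constAddMaximal k E hkE y := by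
  obtain ⟨hne, hinv⟩ := add_mul_ne_zero_and_inv_mem_regularAtZero hy (hkE hc) hc0 hv
  have hcinv : c⁻¹ ∈ regularAtZero E y :=
    subfield_le_regularAtZero (show c⁻¹ ∈ E from inv_mem (hkE hc))
  refine ⟨c⁻¹, inv_mem hc, -(c⁻¹ * v * (c + y * v)⁻¹), ?_, ?_⟩
  · exact neg_mem (mul_mem (mul_mem hcinv hv) hinv)
  · field_simp
    ring

theorem mem_nonunits_constAddMaximal_iff (hy : Transcendental E y) :
    (x ∈ constAddMaximal k E hkE y ∧ (x = 0 ∨ x⁻¹ ∉ constAddMaximal k E hkE y)) ↔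
      ∃ v ∈ regularAtZero E y, x = y * v := by
  constructor
  · rintro ⟨⟨c, hc, v, hv, rfl⟩, hnonunit⟩
    have hc0 : c = 0 := by
      by_contra hc0
      rcases hnonunit with hzero | hinv
      · exact (add_mul_ne_zero_and_inv_mem_regularAtZero hy (hkE hc) hc0 hv).1 hzero
      · exact hinv (inv_add_mul_mem_constAddMaximal hy hc hc0 hv)
    exact ⟨v, hv, by rw [hc0, zero_add]⟩
  · rintro ⟨v, hv, rfl⟩
    refine ⟨mul_mem_constAddMaximal hv, or_iff_not_imp_left.2 fun hyv hinv => ?_⟩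
    obtain ⟨c, hc, w, hw, hcw⟩ := mem_constAddMaximal.1 hinv
    have hinv' : (y * v)⁻¹ ∈ regularAtZero E y := hcw ▸
      add_mem (subfield_le_regularAtZero (hkE hc)) (mul_mem self_mem_regularAtZero hw)
    refine inv_notMem_regularAtZero hy ?_
    have := mul_mem hv hinv'
    rwa [mul_inv, mul_left_comm, mul_inv_cancel₀ (right_ne_zero_of_mul hyv), mul_one] at this

theorem eventually_pow_mul_mem_constAddMaximal
    (hx : x ∈ Subfield.closure ((E : Set Q) ∪ {y})) :
    ∀ᶠ m in Filter.atTop, y ^ m * x ∈ constAddMaximal k E hkE y := by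
  obtain ⟨m, hm⟩ := exists_pow_mul_mem_regularAtZero hx
  refine eventually_pow_mul_mem self_mem_constAddMaximal (m := m + 1) ?_
  rw [pow_succ', mul_assoc]
  exact mul_mem_constAddMaximal hm

end RegularAtZero

noncomputable section Nagata

open Polynomial

variable {Q : Type*} [Field Q]

/-- The Nagata ring `R(T)` inside `Q`: the fractions `f(T)/g(T)` with `f, g ∈ R[T]`, where the
coefficients of `g` generate the unit ideal of `R`. -/
def nagataRing (R : Type*) [CommRing R] [Algebra R Q] (T : Q) : Subring Q :=
  fractionSubring (aeval T : R[X] →ₐ[R] Q).toRingHom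
    { carrier := {g | g.contentIdeal = ⊤}
      one_mem' := contentIdeal_one
      mul_mem' := contentIdeal_mul_eq_top_of_contentIdeal_eq_top }

section

variable {R : Type*} [CommRing R] [Algebra R Q] {T x : Q}

theorem mem_nagataRing : x ∈ nagataRing R T ↔
    ∃ f g : R[X], g.contentIdeal = ⊤ ∧ aeval T g ≠ 0 ∧ x = aeval T f / aeval T g := by
  simp [nagataRing, mem_fractionSubring]

theorem contentIdeal_eq_top_of_coeff_eq_one {g : R[X]} {i : ℕ} (h : g.coeff i = 1) :
    g.contentIdeal = ⊤ :=
  (Ideal.eq_top_iff_one _).2 (h ▸ coeff_mem_contentIdeal g i)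

theorem contentIdeal_eq_top_iff_exists_sum_eq_one {g : R[X]} :
    g.contentIdeal = ⊤ ↔ ∃ (t : Finset ℕ) (u : ℕ → R), ∑ i ∈ t, u i * g.coeff i = 1 := by
  classical
  rw [Ideal.eq_top_iff_one]
  constructor
  · intro hone
    rw [contentIdeal_def, coeffs, Finset.coe_image] at hone
    exact ⟨_, (Submodule.mem_span_image_finset_iff_exists_fun' R).1 hone⟩
  · rintro ⟨t, u, hsum⟩
    rw [← hsum]
    exact sum_mem fun i _ => Ideal.mul_mem_left _ _ (coeff_mem_contentIdeal g i)

theorem algebraMap_mem_nagataRing (a : R) : algebraMap R Q a ∈ nagataRing R T := by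
  have hC : aeval T (C a : R[X]) ∈ nagataRing R T := map_mem_fractionSubring (C a)
  rwa [aeval_C] at hC

theorem self_mem_nagataRing : T ∈ nagataRing R T := by
  have hX : aeval T (X : R[X]) ∈ nagataRing R T := map_mem_fractionSubring X
  rwa [aeval_X] at hX

theorem inv_self_mem_nagataRing : T⁻¹ ∈ nagataRing R T := by
  have hX : (aeval T (X : R[X]))⁻¹ ∈ nagataRing R T :=
    inv_map_mem_fractionSubring (contentIdeal_eq_top_of_coeff_eq_one (i := 1) coeff_X_one)
  rwa [aeval_X] at hX

end

variable {W : Subring Q} {L : Subfield Q} {T x y : Q}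

theorem exists_sum_mul_coeff_map_eq_one_iff {G : W[X]} :
    (∃ (t : Finset ℕ) (u : ℕ → Q), (∀ i ∈ t, u i ∈ W) ∧
      ∑ i ∈ t, u i * (G.map (algebraMap W Q)).coeff i = 1) ↔ G.contentIdeal = ⊤ := by
  classical
  rw [contentIdeal_eq_top_iff_exists_sum_eq_one]
  constructor
  · rintro ⟨t, u, hu, hsum⟩
    refine ⟨t, fun i => if hi : i ∈ t then ⟨u i, hu i hi⟩ else 0,
      FaithfulSMul.algebraMap_injective W Q ?_⟩
    rw [map_one, ← hsum, map_sum]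
    refine Finset.sum_congr rfl fun i hi => ?_
    simp only [map_mul, coeff_map, dif_pos hi]
    rfl
  · rintro ⟨t, u, hsum⟩
    refine ⟨t, fun i => algebraMap W Q (u i), fun i _ => (u i).2, ?_⟩
    simpa using congrArg (algebraMap W Q) hsum

theorem setOf_eval_div_eval_eq_nagataRing (hT : Transcendental W T) :
    {x | ∃ f g : Q[X], (∀ i, f.coeff i ∈ W) ∧ (∀ i, g.coeff i ∈ W) ∧
      (∃ (t : Finset ℕ) (u : ℕ → Q), (∀ i ∈ t, u i ∈ W) ∧ ∑ i ∈ t, u i * g.coeff i = 1) ∧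
      x = f.eval T / g.eval T} = (nagataRing W T : Set Q) := by
  ext x
  rw [SetLike.mem_coe, mem_nagataRing]
  constructor
  · rintro ⟨f, g, hf, hg, hcontent, rfl⟩
    obtain ⟨F, rfl⟩ := forall_coeff_mem_iff_exists_map.1 hf
    obtain ⟨G, rfl⟩ := forall_coeff_mem_iff_exists_map.1 hg
    have hG := exists_sum_mul_coeff_map_eq_one_iff.1 hcontent
    refine ⟨F, G, hG, fun hzero => ?_, by simp only [eval_map_algebraMap]⟩
    rw [transcendental_iff.1 hT G hzero, contentIdeal_zero] at hG
    exact bot_ne_top hG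
  · rintro ⟨F, G, hG, -, rfl⟩
    exact ⟨_, _, forall_coeff_mem_iff_exists_map.2 ⟨F, rfl⟩,
      forall_coeff_mem_iff_exists_map.2 ⟨G, rfl⟩, exists_sum_mul_coeff_map_eq_one_iff.2 hG,
      by simp only [eval_map_algebraMap]⟩

theorem exists_coeff_forall_div_mem (hW : ∀ x ∈ L, x ∈ W ∨ x⁻¹ ∈ W) {g : Q[X]} (hg0 : g ≠ 0)
    (hg : ∀ i, g.coeff i ∈ L) : ∃ j, g.coeff j ≠ 0 ∧ ∀ i, g.coeff i / g.coeff j ∈ W := by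
  let V : ValuationSubring L :=
    { W.comap L.subtype with mem_or_inv_mem' := fun x => hW x x.2 }
  obtain ⟨j, hj, hmax⟩ := g.support.exists_max_image (fun i => V.valuation ⟨g.coeff i, hg i⟩)
    (support_nonempty.2 hg0)
  refine ⟨j, mem_support_iff.1 hj, fun i => ?_⟩
  by_cases hi : g.coeff i = 0
  · simp only [hi, zero_div, zero_mem]
  have hle : V.valuation (⟨g.coeff i, hg i⟩ / ⟨g.coeff j, hg j⟩) ≤ 1 := by
    rw [map_div₀]
    exact div_le_one_of_le₀ (hmax i (mem_support_iff.2 hi)) zero_le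
  exact (V.valuation_le_one_iff _).1 hle

theorem div_mem_nagataRing (hW : ∀ x ∈ L, x ∈ W ∨ x⁻¹ ∈ W) {f g : Q[X]} (hg0 : g ≠ 0)
    (hg : ∀ i, g.coeff i ∈ L) (hf : ∀ i, f.coeff i / g.leadingCoeff ∈ W) :
    f.eval T / g.eval T ∈ nagataRing W T := by
  obtain ⟨j, hj0, hj⟩ := exists_coeff_forall_div_mem hW hg0 hg
  obtain ⟨F, hF⟩ := forall_coeff_mem_iff_exists_map.1 <|
    show ∀ i, (C (g.coeff j)⁻¹ * f).coeff i ∈ W by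
    intro i
    have := mul_mem (hf i) (hj g.natDegree)
    rwa [coeff_natDegree, div_mul_div_cancel₀ (leadingCoeff_ne_zero.2 hg0), div_eq_inv_mul,
      ← coeff_C_mul] at this
  obtain ⟨G, hG⟩ := forall_coeff_mem_iff_exists_map.1 <|
    show ∀ i, (C (g.coeff j)⁻¹ * g).coeff i ∈ W by
    intro i
    rw [coeff_C_mul, ← div_eq_inv_mul]
    exact hj i
  have hFT : aeval T F = (g.coeff j)⁻¹ * f.eval T := by
    rw [← eval_map_algebraMap, hF, eval_mul, eval_C]
  have hGT : aeval T G = (g.coeff j)⁻¹ * g.eval T := by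
    rw [← eval_map_algebraMap, hG, eval_mul, eval_C]
  have hGj : G.coeff j = 1 := Subtype.coe_injective <| by
    have := congrArg (coeff · j) hG
    simpa [hj0] using this
  by_cases hgT : g.eval T = 0
  · simp only [hgT, div_zero, zero_mem]
  refine mem_nagataRing.2 ⟨F, G, contentIdeal_eq_top_of_coeff_eq_one hGj, ?_, ?_⟩
  · exact hGT ▸ mul_ne_zero (inv_ne_zero hj0) hgT
  · rw [hFT, hGT, mul_div_mul_left _ _ (inv_ne_zero hj0)]

/-- The intersection of the Nagata rings `W(T)` for `W ∈ 𝒲`. When `𝒲` consists of the valuation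
overrings of `D` in `L` and `T` is transcendental over `L`, this is `Kr_{L(T)}(D, b)`. -/
def kroneckerRing (𝒲 : Set (Subring Q)) (T : Q) : Subring Q :=
  ⨅ W ∈ 𝒲, nagataRing W T

variable {𝒲 : Set (Subring Q)}

theorem mem_kroneckerRing : x ∈ kroneckerRing 𝒲 T ↔ ∀ W ∈ 𝒲, x ∈ nagataRing W T := by
  simp only [kroneckerRing, Subring.mem_iInf]

theorem mem_kroneckerRing_of_forall_mem (hx : ∀ W ∈ 𝒲, x ∈ W) : x ∈ kroneckerRing 𝒲 T :=
  mem_kroneckerRing.2 fun W hW => algebraMap_mem_nagataRing (⟨x, hx W hW⟩ : W)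

theorem self_mem_kroneckerRing : T ∈ kroneckerRing 𝒲 T :=
  mem_kroneckerRing.2 fun _ _ => self_mem_nagataRing

theorem inv_self_mem_kroneckerRing : T⁻¹ ∈ kroneckerRing 𝒲 T :=
  mem_kroneckerRing.2 fun _ _ => inv_self_mem_nagataRing

theorem kroneckerRing_le_closure (hL : L.toSubring ∈ 𝒲) :
    kroneckerRing 𝒲 T ≤ (Subfield.closure ((L : Set Q) ∪ {T})).toSubring := fun x hx => by
  obtain ⟨f, g, -, -, rfl⟩ := mem_nagataRing.1 (mem_kroneckerRing.1 hx _ hL)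
  exact mem_subfieldClosure_insert_iff.2 ⟨f, g, rfl⟩

theorem eventually_pow_mul_mem_kroneckerRing (h𝒲 : ∀ W ∈ 𝒲, ∀ x ∈ L, x ∈ W ∨ x⁻¹ ∈ W)
    (hpow : ∀ x ∈ L, ∀ᶠ m in Filter.atTop, ∀ W ∈ 𝒲, y ^ m * x ∈ W)
    (hx : x ∈ Subfield.closure ((L : Set Q) ∪ {T})) :
    ∀ᶠ m in Filter.atTop, y ^ m * x ∈ kroneckerRing 𝒲 T := by
  obtain ⟨f, g, rfl⟩ := mem_subfieldClosure_insert_iff.1 hx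
  rcases eq_or_ne g 0 with rfl | hg0
  · simp
  have hcoeff : ∀ᶠ m in Filter.atTop, ∀ i ∈ f.support, ∀ W ∈ 𝒲,
      y ^ m * ((f.coeff i / g.leadingCoeff : L) : Q) ∈ W :=
    (Filter.eventually_all_finset _).2 fun i _ => hpow _ (SetLike.coe_mem _)
  filter_upwards [hcoeff] with m hm
  refine mem_kroneckerRing.2 fun W hW => ?_
  set ι := algebraMap L Q
  have hdiv : (C (y ^ m) * f.map ι).eval T / (g.map ι).eval T ∈ nagataRing W T := by
    refine div_mem_nagataRing (h𝒲 W hW) (map_ne_zero hg0) (fun i => ?_) (fun i => ?_)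
    · rw [coeff_map]
      exact SetLike.coe_mem (g.coeff i)
    · rw [coeff_C_mul, coeff_map, leadingCoeff_map, mul_div_assoc, ← map_div₀]
      by_cases hi : i ∈ f.support
      · exact hm i hi W hW
      · simp only [notMem_support_iff.1 hi, zero_div, map_zero, mul_zero, zero_mem]
  rwa [eval_mul, eval_C, eval_map_algebraMap, eval_map_algebraMap, mul_div_assoc] at hdiv

end Nagata

section Ambient

variable {k0 : Type} [Field k0] {r : ℕ}

theorem krSet_eq_kroneckerRing {D : Set (Amb k0 r)} {L : Subfield (Amb k0 r)} {T : Amb k0 r}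
    (hT : Transcendental L T) :
    krSet k0 r D L T = kroneckerRing (valOverringsIn k0 r D L) T := by
  ext x
  simp only [krSet, Set.mem_iInter, SetLike.mem_coe, mem_kroneckerRing]
  refine forall₂_congr fun W hW => ?_
  exact Set.ext_iff.1 (setOf_eval_div_eval_eq_nagataRing (transcendental_of_le hW.2.1 hT)) x

theorem locAt_nonunitsIn_inter {D R : Subring (Amb k0 r)} {s : Amb k0 r} (hDR : D ≤ R)
    (hs : s ≠ 0) (hsD : s ∈ D) (hsR : s⁻¹ ∈ R) (hpow : ∀ x ∈ R, ∃ m : ℕ, s ^ m * x ∈ D) :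
    locAt k0 r D (nonunitsIn k0 r R ∩ D) = R := by
  ext x
  constructor
  · rintro ⟨a, ha, b, hb, hunit, rfl⟩
    have hbR : b⁻¹ ∈ R := by
      by_contra hb'
      exact hunit ⟨⟨hDR hb, Or.inr hb'⟩, hb⟩
    rw [div_eq_mul_inv]
    exact mul_mem (hDR ha) hbR
  · intro hx
    obtain ⟨m, hm⟩ := hpow x hx
    refine ⟨_, hm, _, pow_mem hsD m, ?_, (mul_div_cancel_left₀ x (pow_ne_zero m hs)).symm⟩
    rintro ⟨⟨-, hzero | hnonunit⟩, -⟩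
    · exact pow_ne_zero m hs hzero
    · exact hnonunit (inv_pow s m ▸ pow_mem hsR m)

end Ambient

noncomputable section Tower

variable {k0 : Type} [Field k0] {r : ℕ}

/-- The indeterminate with index `j` as an element of the ambient field. -/
def ambVar (j : TowerVars r) : Amb k0 r :=
  algebraMap (MvPolynomial (TowerVars r) k0) (Amb k0 r) (MvPolynomial.X j)

theorem algebraicIndependent_ambVar :
    AlgebraicIndependent k0 (ambVar : TowerVars r → Amb k0 r) :=
  (MvPolynomial.algebraicIndependent_X (TowerVars r) k0).map'
    (f := IsScalarTower.toAlgHom k0 (MvPolynomial (TowerVars r) k0) (Amb k0 r))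
    (IsFractionRing.injective (MvPolynomial (TowerVars r) k0) (Amb k0 r))

theorem transcendental_ambVar {j : TowerVars r} {E : Subfield (Amb k0 r)}
    (hE : E ≤ Subfield.closure (baseSet k0 r ∪ ambVar '' {j}ᶜ)) :
    Transcendental E (ambVar j : Amb k0 r) := by
  have htrans : Transcendental (IntermediateField.adjoin k0 (ambVar '' {j}ᶜ : Set (Amb k0 r)))
      (ambVar j : Amb k0 r) :=
    IntermediateField.transcendental_adjoin_iff.2
      (algebraicIndependent_ambVar.transcendental_adjoin (by simp))
  have hadjoin : E ≤ (IntermediateField.adjoin k0 (ambVar '' {j}ᶜ)).toSubfield := by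
    rw [IntermediateField.adjoin_toSubfield]
    exact hE
  exact transcendental_of_le (S := E.toSubring) hadjoin htrans

theorem Ffld_le_iff {n : ℕ} {S : Subfield (Amb k0 r)} : Ffld k0 r n ≤ S ↔
    baseSet k0 r ⊆ S ∧ (∀ i, 1 ≤ i → i ≤ n → ambX k0 r i ∈ S) ∧ ∀ i, ambZ k0 r i ∈ S := by
  simp only [Ffld, kfld, Subfield.closure_le, Set.union_subset_iff, SetLike.coe_subset_coe,
    Set.range_subset_iff, SetLike.mem_coe, and_assoc]
  refine and_congr_right' (and_congr_left' ⟨fun h i h1 hn => h ⟨i, h1, hn, rfl⟩, ?_⟩)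
  rintro h _ ⟨i, h1, hn, rfl⟩
  exact h i h1 hn

theorem Kfld_le_iff {n : ℕ} {S : Subfield (Amb k0 r)} :
    Kfld k0 r n ≤ S ↔ Ffld k0 r n ≤ S ∧ ambY k0 r ∈ S := by
  simp only [Kfld, Subfield.closure_le, Set.union_subset_iff, SetLike.coe_subset_coe,
    Set.singleton_subset_iff, SetLike.mem_coe]

theorem kfld_le_Ffld (n : ℕ) : kfld k0 r n ≤ Ffld k0 r n :=
  fun _ hx => Subfield.subset_closure (Or.inl hx)

theorem Ffld_le_Kfld (n : ℕ) : Ffld k0 r n ≤ Kfld k0 r n :=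
  (Kfld_le_iff.1 le_rfl).1

theorem ambY_mem_Kfld (n : ℕ) : ambY k0 r ∈ Kfld k0 r n :=
  (Kfld_le_iff.1 le_rfl).2

variable (k0 r) in
theorem transcendental_ambY (n : ℕ) : Transcendental (Ffld k0 r n) (ambY k0 r) := by
  refine transcendental_ambVar (Ffld_le_iff.2 ⟨?_, fun i _ _ => ?_, fun i => ?_⟩)
  · exact fun x hx => Subfield.subset_closure (Or.inl hx)
  · exact Subfield.subset_closure (Or.inr ⟨Sum.inl i, by simp, rfl⟩)
  · exact Subfield.subset_closure (Or.inr ⟨Sum.inr (Sum.inr i), by simp, rfl⟩)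

variable (k0 r) in
theorem transcendental_ambX (n : ℕ) : Transcendental (Kfld k0 r n) (ambX k0 r (n + 1)) := by
  refine transcendental_ambVar
    (Kfld_le_iff.2 ⟨Ffld_le_iff.2 ⟨?_, fun i _ hi => ?_, fun i => ?_⟩, ?_⟩)
  · exact fun x hx => Subfield.subset_closure (Or.inl hx)
  · have hne : i ≠ n + 1 := by omega
    exact Subfield.subset_closure (Or.inr ⟨Sum.inl i, by simpa using hne, rfl⟩)
  · exact Subfield.subset_closure (Or.inr ⟨Sum.inr (Sum.inr i), by simp, rfl⟩)
  · exact Subfield.subset_closure (Or.inr ⟨Sum.inr (Sum.inl ()), by simp, rfl⟩)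

variable (k0 r) in
theorem ambY_ne_zero : ambY k0 r ≠ 0 :=
  fun hzero => transcendental_ambY k0 r 0 (hzero ▸ isAlgebraic_zero)

theorem ambY_mul_ambX' (n : ℕ) :
    ambY k0 r * ambX' k0 r n = 1 + ambY k0 r * ambX k0 r n :=
  mul_div_cancel₀ _ (ambY_ne_zero k0 r)

theorem ambX'_eq (n : ℕ) : ambX' k0 r n = ambX k0 r n + (ambY k0 r)⁻¹ := by
  rw [ambX', add_div, mul_div_cancel_left₀ _ (ambY_ne_zero k0 r), one_div, add_comm]

theorem transcendental_ambX' (n : ℕ) :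
    Transcendental (Kfld k0 r n) (ambX' k0 r (n + 1)) := fun halg => by
  have hYinv : IsAlgebraic (Kfld k0 r n) (ambY k0 r)⁻¹ :=
    isAlgebraic_algebraMap (⟨(ambY k0 r)⁻¹, inv_mem (ambY_mem_Kfld n)⟩ : Kfld k0 r n)
  refine transcendental_ambX k0 r n ?_
  rw [← add_sub_cancel_right (ambX k0 r (n + 1)) (ambY k0 r)⁻¹, ← ambX'_eq]
  exact halg.sub hYinv

theorem Kfld_succ (n : ℕ) : Kfld k0 r (n + 1) =
    Subfield.closure ((Kfld k0 r n : Set (Amb k0 r)) ∪ {ambX' k0 r (n + 1)}) := by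
  obtain ⟨hbase, hX, hZ⟩ := Ffld_le_iff.1 (Ffld_le_Kfld (k0 := k0) (r := r) n)
  obtain ⟨hbase', hX', hZ'⟩ := Ffld_le_iff.1 (Ffld_le_Kfld (k0 := k0) (r := r) (n + 1))
  have hle : Kfld k0 r n ≤
      Subfield.closure ((Kfld k0 r n : Set (Amb k0 r)) ∪ {ambX' k0 r (n + 1)}) :=
    fun x hx => Subfield.subset_closure (Or.inl hx)
  refine le_antisymm (Kfld_le_iff.2 ⟨Ffld_le_iff.2 ⟨hbase.trans hle, fun i h1 hi => ?_,
    fun i => hle (hZ i)⟩, hle (ambY_mem_Kfld n)⟩) (Subfield.closure_le.2 ?_)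
  · rcases Nat.le_or_eq_of_le_succ hi with hi | rfl
    · exact hle (hX i h1 hi)
    · rw [← add_sub_cancel_right (ambX k0 r (n + 1)) (ambY k0 r)⁻¹, ← ambX'_eq]
      exact sub_mem (Subfield.subset_closure (Or.inr rfl)) (inv_mem (hle (ambY_mem_Kfld n)))
  · refine Set.union_subset ?_ (Set.singleton_subset_iff.2 ?_)
    · exact Kfld_le_iff.2 ⟨Ffld_le_iff.2 ⟨hbase', fun i h1 hi => hX' i h1 (by omega), hZ'⟩,
        ambY_mem_Kfld _⟩
    · rw [ambX'_eq]
      exact add_mem (hX' _ (by omega) le_rfl) (inv_mem (ambY_mem_Kfld _))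

variable (k0 r)

/-- The subring with underlying set `Aset k0 r n`. -/
def towerA (n : ℕ) : Subring (Amb k0 r) :=
  constAddMaximal (kfld k0 r n) (Ffld k0 r n) (kfld_le_Ffld n) (ambY k0 r)

/-- The subring with underlying set `Bset k0 r (n + 2)`; the index is shifted because `Bₙ` is only
meaningful for `n ≥ 2`. -/
def towerB (n : ℕ) : Subring (Amb k0 r) :=
  kroneckerRing (valOverringsIn k0 r (Dset k0 r (n + 1)) (Kfld k0 r (n + 1))) (ambX' k0 r (n + 2))

/-- The subring with underlying set `Dset k0 r (n + 2)`, with the same shift as in `towerB`. -/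
def towerD (n : ℕ) : Subring (Amb k0 r) :=
  towerB k0 r n ⊓ towerA k0 r (n + 2)

variable {k0 r}

theorem Vset_eq (n : ℕ) : Vset k0 r n = regularAtZero (Ffld k0 r n) (ambY k0 r) :=
  Set.ext fun _ => (mem_regularAtZero_iff_exists_mem_closure
    (transcendental_ambY k0 r n)).symm

theorem Aset_eq (n : ℕ) : Aset k0 r n = towerA k0 r n := by
  ext x
  simp only [Aset, Mset, Vset_eq, towerA, SetLike.mem_coe, mem_constAddMaximal]
  constructor
  · rintro ⟨c, hc, _, ⟨v, hv, rfl⟩, rfl⟩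
    exact ⟨c, hc, v, hv, rfl⟩
  · rintro ⟨c, hc, v, hv, rfl⟩
    exact ⟨c, hc, _, ⟨v, hv, rfl⟩, rfl⟩

theorem Mset_eq (n : ℕ) : Mset k0 r n = nonunitsIn k0 r (towerA k0 r n) := by
  ext x
  simp only [Mset, Vset_eq, nonunitsIn, towerA, Set.mem_ofPred_eq, SetLike.mem_coe]
  rw [mem_nonunits_constAddMaximal_iff (transcendental_ambY k0 r n)]

theorem Bset_eq (n : ℕ) : Bset k0 r (n + 2) = towerB k0 r n :=
  krSet_eq_kroneckerRing (transcendental_ambX' (n + 1))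

theorem Dset_eq (n : ℕ) : Dset k0 r (n + 2) = towerD k0 r n := by
  rw [towerD, Subring.coe_inf, ← Bset_eq, ← Aset_eq]
  rfl

theorem towerA_le_Kfld (n : ℕ) : towerA k0 r n ≤ (Kfld k0 r n).toSubring :=
  constAddMaximal_le_closure

theorem Dset_subset_Kfld : ∀ n, Dset k0 r (n + 1) ⊆ Kfld k0 r (n + 1)
  | 0 => fun _ hx => towerA_le_Kfld 1 ((Aset_eq 1).subset hx)
  | n + 1 => fun _ hx => towerA_le_Kfld (n + 2) ((Aset_eq (n + 2)).subset hx.2)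

theorem towerB_le_Kfld (n : ℕ) : towerB k0 r n ≤ (Kfld k0 r (n + 2)).toSubring := by
  rw [Kfld_succ (n + 1)]
  exact kroneckerRing_le_closure ⟨Dset_subset_Kfld n, subset_rfl, fun _ => Or.inl⟩

theorem Dset_subset_towerB (n : ℕ) : Dset k0 r (n + 1) ⊆ towerB k0 r n :=
  fun _ hx => mem_kroneckerRing_of_forall_mem fun _ hW => hW.1 hx

theorem ambY_mem_towerA (n : ℕ) : ambY k0 r ∈ towerA k0 r n :=
  self_mem_constAddMaximal

theorem ambY_mem_Dset : ∀ n, ambY k0 r ∈ Dset k0 r (n + 1)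
  | 0 => (Aset_eq 1).superset (ambY_mem_towerA 1)
  | n + 1 => (Dset_eq n).superset ⟨Dset_subset_towerB n (ambY_mem_Dset n), ambY_mem_towerA _⟩

theorem eventually_pow_ambY_mul_mem_towerA {n : ℕ} {x : Amb k0 r} (hx : x ∈ Kfld k0 r n) :
    ∀ᶠ m in Filter.atTop, ambY k0 r ^ m * x ∈ towerA k0 r n :=
  eventually_pow_mul_mem_constAddMaximal hx

theorem eventually_pow_ambY_mul_mem_towerB {n : ℕ} {x : Amb k0 r}
    (hD : ∀ z ∈ Kfld k0 r (n + 1), ∀ᶠ m in Filter.atTop, ambY k0 r ^ m * z ∈ Dset k0 r (n + 1))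
    (hx : x ∈ Kfld k0 r (n + 2)) :
    ∀ᶠ m in Filter.atTop, ambY k0 r ^ m * x ∈ towerB k0 r n := by
  rw [Kfld_succ (n + 1)] at hx
  refine eventually_pow_mul_mem_kroneckerRing (fun W hW => hW.2.2) (fun z hz => ?_) hx
  exact (hD z hz).mono fun m hm W hW => hW.1 hm

theorem eventually_pow_ambY_mul_mem_Dset (n : ℕ) : ∀ x ∈ Kfld k0 r (n + 1),
    ∀ᶠ m in Filter.atTop, ambY k0 r ^ m * x ∈ Dset k0 r (n + 1) := by
  induction n with
  | zero =>
    intro x hx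
    exact (eventually_pow_ambY_mul_mem_towerA hx).mono fun m hm => (Aset_eq 1).superset hm
  | succ n ih =>
    intro x hx
    rw [Dset_eq]
    exact (eventually_pow_ambY_mul_mem_towerB ih hx).and (eventually_pow_ambY_mul_mem_towerA hx)

theorem ambY_mem_towerD (n : ℕ) : ambY k0 r ∈ towerD k0 r n :=
  (Dset_eq n).subset (ambY_mem_Dset (n + 1))

theorem ambX_mem_regularAtZero {n : ℕ} (hn : 1 ≤ n) :
    ambX k0 r n ∈ regularAtZero (Ffld k0 r n) (ambY k0 r) :=
  subfield_le_regularAtZero ((Ffld_le_iff.1 le_rfl).2.1 n hn le_rfl)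

theorem ambY_mul_ambX'_mem_towerA {n : ℕ} (hn : 1 ≤ n) :
    ambY k0 r * ambX' k0 r n ∈ towerA k0 r n := by
  rw [ambY_mul_ambX']
  exact add_mem (one_mem _) (mul_mem_constAddMaximal (ambX_mem_regularAtZero hn))

theorem inv_ambY_mul_ambX'_mem_towerA {n : ℕ} (hn : 1 ≤ n) :
    (ambY k0 r * ambX' k0 r n)⁻¹ ∈ towerA k0 r n := by
  rw [ambY_mul_ambX']
  exact inv_add_mul_mem_constAddMaximal (transcendental_ambY k0 r n) (one_mem _) one_ne_zero
    (ambX_mem_regularAtZero hn)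

theorem ambY_mul_ambX'_mem_towerD (n : ℕ) :
    ambY k0 r * ambX' k0 r (n + 2) ∈ towerD k0 r n :=
  ⟨mul_mem (ambY_mem_towerD n).1 self_mem_kroneckerRing, ambY_mul_ambX'_mem_towerA (by omega)⟩

theorem ambX'_ne_zero (n : ℕ) : ambX' k0 r (n + 1) ≠ 0 :=
  fun hzero => transcendental_ambX' n (hzero ▸ isAlgebraic_zero)

theorem inv_ambX'_eq (n : ℕ) :
    (ambX' k0 r n)⁻¹ = ambY k0 r * (ambY k0 r * ambX' k0 r n)⁻¹ := by
  rw [mul_inv, mul_inv_cancel_left₀ (ambY_ne_zero k0 r)]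

theorem inv_ambX'_mem_towerD (n : ℕ) : (ambX' k0 r (n + 2))⁻¹ ∈ towerD k0 r n := by
  refine ⟨inv_self_mem_kroneckerRing, ?_⟩
  rw [inv_ambX'_eq]
  exact mul_mem (ambY_mem_towerA _) (inv_ambY_mul_ambX'_mem_towerA (by omega))

theorem exists_pow_inv_ambX'_mul_mem_towerD {n : ℕ} {x : Amb k0 r} (hx : x ∈ towerB k0 r n) :
    ∃ m : ℕ, (ambX' k0 r (n + 2))⁻¹ ^ m * x ∈ towerD k0 r n := by
  obtain ⟨m, hm⟩ := (eventually_pow_ambY_mul_mem_towerA (towerB_le_Kfld n hx)).exists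
  refine ⟨m, mul_mem (pow_mem inv_self_mem_kroneckerRing m) hx, ?_⟩
  rw [inv_ambX'_eq, mul_pow, mul_right_comm]
  exact mul_mem hm (pow_mem (inv_ambY_mul_ambX'_mem_towerA (by omega)) m)

theorem exists_pow_ambY_mul_ambX'_mul_mem_towerD {n : ℕ} {x : Amb k0 r}
    (hx : x ∈ towerA k0 r (n + 2)) :
    ∃ m : ℕ, (ambY k0 r * ambX' k0 r (n + 2)) ^ m * x ∈ towerD k0 r n := by
  obtain ⟨m, hm⟩ := (eventually_pow_ambY_mul_mem_towerB (eventually_pow_ambY_mul_mem_Dset n)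
    (towerA_le_Kfld _ hx)).exists
  refine ⟨m, ?_, mul_mem (pow_mem (ambY_mul_ambX'_mem_towerA (by omega)) m) hx⟩
  rw [mul_pow, mul_right_comm]
  exact mul_mem hm (pow_mem self_mem_kroneckerRing m)

theorem adjoin_ambX'_eq (n : ℕ) :
    (Algebra.adjoin (towerD k0 r n) {ambX' k0 r (n + 2)} : Set (Amb k0 r)) = towerB k0 r n := by
  have h := coe_adjoin_inv_eq_of_pow_mul_mem (D := towerD k0 r n) (R := towerB k0 r n) inf_le_left
    (inv_ne_zero (ambX'_ne_zero (n + 1))) (by rw [inv_inv]; exact self_mem_kroneckerRing)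
    fun x hx => exists_pow_inv_ambX'_mul_mem_towerD hx
  rwa [inv_inv] at h

theorem adjoin_inv_ambY_mul_ambX'_eq (n : ℕ) :
    (Algebra.adjoin (towerD k0 r n) {(ambY k0 r * ambX' k0 r (n + 2))⁻¹} : Set (Amb k0 r)) =
      towerA k0 r (n + 2) :=
  coe_adjoin_inv_eq_of_pow_mul_mem inf_le_right
    (mul_ne_zero (ambY_ne_zero k0 r) (ambX'_ne_zero (n + 1)))
    (inv_ambY_mul_ambX'_mem_towerA (by omega))
    fun _ hx => exists_pow_ambY_mul_ambX'_mul_mem_towerD hx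

theorem locAt_MMset_eq (n : ℕ) :
    locAt k0 r (Dset k0 r (n + 2)) (MMset k0 r (n + 2)) = towerA k0 r (n + 2) := by
  rw [MMset, Mset_eq, Dset_eq]
  exact locAt_nonunitsIn_inter inf_le_right
    (mul_ne_zero (ambY_ne_zero k0 r) (ambX'_ne_zero (n + 1))) (ambY_mul_ambX'_mem_towerD n)
    (inv_ambY_mul_ambX'_mem_towerA (by omega))
    fun _ hx => exists_pow_ambY_mul_ambX'_mul_mem_towerD hx

end Tower

/-- In the tower construction, for every `n ≥ 2`: `Dₙ[X′ₙ] = Bₙ`,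
the elements `1/X′ₙ` and `Y·X′ₙ` lie in `Dₙ`, and
`(Dₙ)_{𝓜ₙ} = Dₙ[1/(Y·X′ₙ)] = Aₙ`, where `𝓜ₙ := Mₙ ∩ Dₙ`. -/
theorem tower_D_adjoin_and_localization
    (k0 : Type) [Field k0] (r : ℕ) (hr : 2 ≤ r) (n : ℕ) (hn : 2 ≤ n) :
    -- `Dₙ[X′ₙ] = Bₙ`
    {x : Amb k0 r | ∃ f : Polynomial (Amb k0 r),
        (∀ i, f.coeff i ∈ Dset k0 r n) ∧ x = f.eval (ambX' k0 r n)} = Bset k0 r n ∧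
    -- `1/X′ₙ ∈ Dₙ` and `Y·X′ₙ ∈ Dₙ`
    (ambX' k0 r n)⁻¹ ∈ Dset k0 r n ∧
    ambY k0 r * ambX' k0 r n ∈ Dset k0 r n ∧
    -- `(Dₙ)_{𝓜ₙ} = Dₙ[1/(Y·X′ₙ)]`
    locAt k0 r (Dset k0 r n) (MMset k0 r n) =
      {x : Amb k0 r | ∃ f : Polynomial (Amb k0 r),
        (∀ i, f.coeff i ∈ Dset k0 r n) ∧ x = f.eval ((ambY k0 r * ambX' k0 r n)⁻¹)} ∧
    -- `(Dₙ)_{𝓜ₙ} = Aₙ`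
    locAt k0 r (Dset k0 r n) (MMset k0 r n) = Aset k0 r n := by
  obtain ⟨n, rfl⟩ := Nat.exists_eq_add_of_le' hn
  rw [locAt_MMset_eq, Dset_eq, Bset_eq, Aset_eq, setOf_eval_eq_adjoin, setOf_eval_eq_adjoin]
  exact ⟨adjoin_ambX'_eq n, inv_ambX'_mem_towerD n, ambY_mul_ambX'_mem_towerD n,
    (adjoin_inv_ambY_mul_ambX'_eq n).symm, rfl⟩
end

section
/- In the tower construction, for every n ≥ 2, 𝓜ₙ := Mₙ ∩ Dₙ is a height-one maximal ideal of Dₙ, and 𝓜ₙ ∩ K_{n−1} = 𝓜_{n−1} (where 𝓜₁ is understood as M₁ ∩ D₁ = M₁). -/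
/- Let `v` be the `Y`-adic valuation and `𝔪` the ideal of the elements of `Aₙ` of positive value. It
is maximal, and since `Aₙ` contains every element of `Kₙ` of positive value, some power of each
element of `𝔪` is divisible by any given nonzero element of `Aₙ`. These properties pass to
`𝓜ₙ = 𝔪 ∩ Dₙ` because every `x ∈ Aₙ` is a fraction over `Dₙ` whose denominator is `1` modulo `𝔪`.
Indeed, write `x` as a rational function `f(T) / g(T)` of `T = X′ₙ` over `K_{n-1}` and take the
denominator `e = (1 + x / T ^ N)⁻¹ = T ^ N g(T) / (T ^ N g(T) + f(T))` with `N` larger than the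
degree of `f`. The coefficients of the sum `T ^ N g + f` are those of `f` and `g` side by side, so
over any valuation ring it divides both up to content: `e` and `x e` lie in every Nagata ring
defining `Bₙ`. And `e - 1` has positive value because `T` has a pole at `v`.

For the contraction to `K_{n-1}`, a Nagata ring `W(T)` meets `K_{n-1}` in `W`, so `Bₙ ∩ K_{n-1}` is
the intersection of the valuation overrings of `D_{n-1}` in `K_{n-1}`. By induction this is
`D_{n-1}`: the ring `A_{n-1}` is an intersection of valuation rings since `k_{n-1}` is algebraically
closed in `F_{n-1}`, and each `W(T)` is itself a valuation ring of `K_{n-1}(T)`. -/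

open Polynomial
open scoped IntermediateField WithZero

namespace Tower

section Comap

variable {D A : Type*} [CommRing D] [CommRing A] {φ : D →+* A} {M : Ideal A}

/-- Every element of `A` is a fraction `φ d / φ e` whose denominator is `1` modulo `M`. This makes
`D` and `A` have the same residue field at `M` and the same localization there. -/
def HasUnitDenominators (φ : D →+* A) (M : Ideal A) : Prop :=
  ∀ a, ∃ d e, φ e - 1 ∈ M ∧ φ d = a * φ e

theorem HasUnitDenominators.comap_isMaximal [M.IsMaximal] (h : HasUnitDenominators φ M) :
    (M.comap φ).IsMaximal := by
  have hsurj : Function.Surjective ((Ideal.Quotient.mk M).comp φ) := by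
    intro b
    obtain ⟨a, rfl⟩ := Ideal.Quotient.mk_surjective b
    obtain ⟨d, e, he, hd⟩ := h a
    refine ⟨d, Ideal.Quotient.eq.2 ?_⟩
    rw [hd, show a * φ e - a = a * (φ e - 1) by ring]
    exact M.mul_mem_left a he
  let _ := Ideal.Quotient.field M
  rw [← Ideal.mk_ker (I := M), RingHom.comap_ker]
  exact RingHom.ker_isMaximal_of_surjective _ hsurj

theorem HasUnitDenominators.comap_ne_bot [IsDomain A] (h : HasUnitDenominators φ M)
    (hM : M ≠ ⊤) (hM0 : M ≠ ⊥) : M.comap φ ≠ ⊥ := by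
  obtain ⟨m, hm, hm0⟩ := Submodule.exists_mem_ne_zero_of_ne_bot hM0
  obtain ⟨d, e, he, hd⟩ := h m
  have he0 : φ e ≠ 0 := fun h0 => hM <| (Ideal.eq_top_iff_one M).2 <| by
    simpa [h0] using M.neg_mem he
  refine fun hbot => mul_ne_zero hm0 he0 ?_
  rw [← hd, (Submodule.eq_bot_iff _).1 hbot d (Ideal.mem_comap.2 (hd ▸ M.mul_mem_right _ hm)),
    map_zero]

theorem HasUnitDenominators.eq_bot_of_lt_comap (h : HasUnitDenominators φ M)
    (hφ : Function.Injective φ) (hM : M ≠ ⊤) (hpow : ∀ m ∈ M, ∀ a ≠ 0, ∃ N, a ∣ m ^ N)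
    {Q : Ideal D} (hQ : Q.IsPrime) (hlt : Q < M.comap φ) : Q = ⊥ := by
  obtain ⟨hle, m, hm, hmQ⟩ := Set.ssubset_iff_exists.1 hlt
  refine (Submodule.eq_bot_iff _).2 fun q hq => by_contra fun hq0 => ?_
  obtain ⟨N, a, ha⟩ := hpow (φ m) hm (φ q) ((map_ne_zero_iff φ hφ).2 hq0)
  obtain ⟨d, e, he, hd⟩ := h a
  have hmul : m ^ N * e = q * d := hφ (by rw [map_mul, map_mul, map_pow, ha, hd]; ring)
  rcases hQ.mem_or_mem (hmul ▸ Q.mul_mem_right d hq) with hmN | heQ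
  · exact hmQ (hQ.mem_of_pow_mem N hmN)
  · refine hM ((Ideal.eq_top_iff_one M).2 ?_)
    simpa only [sub_sub_cancel] using M.sub_mem (Ideal.mem_comap.1 (hle heQ)) he

end Comap

section Nagata

variable (R : Type*) {E : Type*} [CommRing R] [Field E] [Algebra R E]

/-- The Nagata ring `R(T)`: the fractions `f(T) / g(T)` with `f, g ∈ R[X]` such that the
coefficients of `g` generate the unit ideal. It is meant for `T` transcendental over `R`; a
vanishing denominator `g(T)` gives the junk fraction `0`, which does no harm. -/
def nagataRing (T : E) : Subring E where
  carrier := {x | ∃ f g : R[X], g.contentIdeal = ⊤ ∧ x = aeval T f / aeval T g}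
  zero_mem' := ⟨0, 1, contentIdeal_one, by simp⟩
  one_mem' := ⟨1, 1, contentIdeal_one, by simp⟩
  neg_mem' := by
    rintro _ ⟨f, g, hg, rfl⟩
    exact ⟨-f, g, hg, by rw [map_neg, neg_div]⟩
  mul_mem' := by
    rintro _ _ ⟨f, g, hg, rfl⟩ ⟨f', g', hg', rfl⟩
    exact ⟨f * f', g * g', contentIdeal_mul_eq_top_of_contentIdeal_eq_top hg hg',
      by rw [map_mul, map_mul, div_mul_div_comm]⟩
  add_mem' := by
    rintro _ _ ⟨f, g, hg, rfl⟩ ⟨f', g', hg', rfl⟩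
    by_cases h : aeval T g = 0
    · exact ⟨f', g', hg', by rw [h, div_zero, zero_add]⟩
    by_cases h' : aeval T g' = 0
    · exact ⟨f, g, hg, by rw [h', div_zero, add_zero]⟩
    exact ⟨f * g' + g * f', g * g', contentIdeal_mul_eq_top_of_contentIdeal_eq_top hg hg',
      by rw [div_add_div _ _ h h']; simp only [map_add, map_mul]⟩

variable {R} {T : E}

theorem algebraMap_mem_nagataRing (a : R) : algebraMap R E a ∈ nagataRing R T :=
  ⟨C a, 1, contentIdeal_one, by simp⟩

theorem aeval_ne_zero_of_contentIdeal_eq_top (hT : Transcendental R T) {g : R[X]}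
    (hg : g.contentIdeal = ⊤) : aeval T g ≠ 0 := by
  have := (algebraMap R E).domain_nontrivial
  refine fun h => bot_ne_top (α := Ideal R) ?_
  rw [← hg, transcendental_iff.1 hT g h, contentIdeal_zero]

theorem contentIdeal_le_contentIdeal_X_pow_mul_add {f g : R[X]} {N : ℕ} (hN : f.natDegree < N) :
    f.contentIdeal ≤ (X ^ N * g + f).contentIdeal ∧
      g.contentIdeal ≤ (X ^ N * g + f).contentIdeal := by
  constructor <;> rw [contentIdeal_def, Ideal.span_le] <;> intro c hc <;>
    obtain ⟨i, hi, rfl⟩ := mem_coeffs_iff.1 hc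
  · have hi' : (X ^ N * g + f).coeff i = f.coeff i := by
      rw [coeff_add, coeff_X_pow_mul', if_neg (by have := le_natDegree_of_mem_supp i hi; omega),
        zero_add]
    exact hi' ▸ coeff_mem_contentIdeal _ i
  · have hi' : (X ^ N * g + f).coeff (i + N) = g.coeff i := by
      rw [coeff_add, coeff_X_pow_mul, coeff_eq_zero_of_natDegree_lt (hN.trans_le le_add_self),
        add_zero]
    exact hi' ▸ coeff_mem_contentIdeal _ (i + N)

theorem isUnit_of_inv_mem_nagataRing [FaithfulSMul R E] (hT : Transcendental R T) {a : R}
    (ha : (algebraMap R E a)⁻¹ ∈ nagataRing R T) (ha0 : a ≠ 0) : IsUnit a := by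
  obtain ⟨f, g, hg, hfg⟩ := ha
  have ha0' : algebraMap R E a ≠ 0 := by
    rwa [Ne, FaithfulSMul.algebraMap_eq_zero_iff]
  have hgf : g = C a * f := by
    refine transcendental_iff_injective.1 hT ?_
    rw [map_mul, aeval_C]
    rw [eq_div_iff (aeval_ne_zero_of_contentIdeal_eq_top hT hg)] at hfg
    rw [← hfg, mul_inv_cancel_left₀ ha0']
  exact isPrimitive_of_contentIdeal_eq_top hg a ⟨f, hgf⟩

end Nagata

section Bezout

variable {R E : Type*} [CommRing R] [IsDomain R] [IsBezout R] [Field E] [Algebra R E]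

theorem exists_eq_C_mul_contentIdeal_eq_top {h : R[X]} (hh : h ≠ 0) :
    ∃ a : R, a ≠ 0 ∧ h.contentIdeal = Ideal.span {a} ∧
      ∃ h₀ : R[X], h₀.contentIdeal = ⊤ ∧ h = C a * h₀ := by
  have hprin := IsBezout.isPrincipal_of_FG h.contentIdeal h.contentIdeal_FG
  obtain ⟨a, ha⟩ := hprin.principal
  rw [Ideal.submodule_span_eq] at ha
  have ha0 : a ≠ 0 := by
    rintro rfl
    exact hh ((contentIdeal_eq_bot_iff h).1 (by simpa using ha))
  obtain ⟨h₀, rfl⟩ := (hprin.contentIdeal_le_span_iff_dvd a).1 ha.le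
  refine ⟨a, ha0, ha, h₀, ?_, rfl⟩
  have hprin₀ := IsBezout.isPrincipal_of_FG h₀.contentIdeal h₀.contentIdeal_FG
  rw [← hprin₀.isPrimitive_iff_contentIdeal_eq_top]
  intro r hr
  have har : a * r ∣ a := by
    rw [← Ideal.span_singleton_le_span_singleton, ← ha, hprin.contentIdeal_le_span_iff_dvd, C_mul]
    exact mul_dvd_mul_left _ hr
  exact isUnit_of_dvd_one ((mul_dvd_mul_iff_left ha0).1 (by rwa [mul_one]))

variable {T : E} {f g : R[X]}

theorem aeval_div_aeval_mem_nagataRing [FaithfulSMul R E] {h : R[X]} (hh : h ≠ 0)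
    (hf : f.contentIdeal ≤ h.contentIdeal) : aeval T f / aeval T h ∈ nagataRing R T := by
  obtain ⟨a, ha0, ha, h₀, hh₀, rfl⟩ := exists_eq_C_mul_contentIdeal_eq_top hh
  have hprin := IsBezout.isPrincipal_of_FG f.contentIdeal f.contentIdeal_FG
  obtain ⟨f₀, rfl⟩ := (hprin.contentIdeal_le_span_iff_dvd a).1 (hf.trans ha.le)
  refine ⟨f₀, h₀, hh₀, ?_⟩
  rw [map_mul, map_mul, aeval_C, mul_div_mul_left]
  rwa [Ne, FaithfulSMul.algebraMap_eq_zero_iff]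

theorem aeval_div_aeval_mem_or_inv_mem_nagataRing [ValuationRing R] [FaithfulSMul R E]
    (f g : R[X]) :
    aeval T f / aeval T g ∈ nagataRing R T ∨ (aeval T f / aeval T g)⁻¹ ∈ nagataRing R T := by
  rw [inv_div]
  by_cases hf : f = 0
  · simp [hf, zero_mem]
  by_cases hg : g = 0
  · simp [hg, zero_mem]
  exact ((ValuationRing.iff_ideal_total.1 ‹_›).total f.contentIdeal g.contentIdeal).imp
    (aeval_div_aeval_mem_nagataRing hg) (aeval_div_aeval_mem_nagataRing hf)

theorem inv_one_add_div_pow_mem_nagataRing [FaithfulSMul R E] (hT : Transcendental R T) {x : E}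
    (hx : x = aeval T f / aeval T g) {N : ℕ} (hN : f.natDegree < N) :
    (1 + x / T ^ N)⁻¹ ∈ nagataRing R T ∧ x * (1 + x / T ^ N)⁻¹ ∈ nagataRing R T := by
  by_cases hg : g = 0
  · simp [hx, hg, one_mem, zero_mem]
  obtain ⟨hf_le, hg_le⟩ := contentIdeal_le_contentIdeal_X_pow_mul_add (g := g) hN
  have hh : X ^ N * g + f ≠ 0 := fun h => hg <| by
    rwa [h, contentIdeal_zero, le_bot_iff, contentIdeal_eq_bot_iff] at hg_le
  have hgT : aeval T g ≠ 0 := fun h => hg (transcendental_iff.1 hT g h)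
  have hTN : T ^ N ≠ 0 := pow_ne_zero N fun h => hT (h ▸ isAlgebraic_zero)
  have hinv : (1 + x / T ^ N)⁻¹ = aeval T (X ^ N * g) / aeval T (X ^ N * g + f) := by
    rw [hx, map_add, map_mul, map_pow, aeval_X, inv_eq_iff_eq_inv, inv_div]
    field_simp
  have hxinv : x * (1 + x / T ^ N)⁻¹ = aeval T (X ^ N * f) / aeval T (X ^ N * g + f) := by
    rw [hinv, hx, map_mul, map_mul]
    field_simp
  have hX_le (p : R[X]) : (X ^ N * p).contentIdeal ≤ p.contentIdeal :=
    contentIdeal_le_contentIdeal_of_dvd (dvd_mul_left _ _)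
  rw [hxinv, hinv]
  exact ⟨aeval_div_aeval_mem_nagataRing hh ((hX_le g).trans hg_le),
    aeval_div_aeval_mem_nagataRing hh ((hX_le f).trans hf_le)⟩

end Bezout

section Fraction

variable {R L E : Type*} [CommRing R] [IsDomain R] [Field L] [Field E] [Algebra R L]
  [IsFractionRing R L] [Algebra R E] [Algebra L E] [IsScalarTower R L E] {T : E}

variable (R T)

theorem exists_aeval_eq_algebraMap_mul_aeval (f : L[X]) :
    ∃ (b : R) (f' : R[X]), b ≠ 0 ∧ f'.natDegree ≤ f.natDegree ∧
      aeval T f' = algebraMap R E b * aeval T f := by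
  obtain ⟨b, hb, hf⟩ := IsLocalization.integerNormalization_spec (nonZeroDivisors R) f
  refine ⟨b, IsLocalization.integerNormalization (nonZeroDivisors R) f,
    nonZeroDivisors.ne_zero hb, ?_, ?_⟩
  · rw [← natDegree_map_eq_of_injective (IsFractionRing.injective R L), hf]
    exact natDegree_smul_le _ _
  · rw [← aeval_map_algebraMap L, hf, ← IsScalarTower.algebraMap_smul L b f, map_smul,
      algebraMap_smul, Algebra.smul_def]

theorem exists_aeval_div_aeval_eq [FaithfulSMul R E] (f g : L[X]) :
    ∃ f' g' : R[X], f'.natDegree ≤ f.natDegree ∧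
      aeval T f / aeval T g = aeval T f' / aeval T g' := by
  obtain ⟨b, f', hb, hdeg, hf⟩ := exists_aeval_eq_algebraMap_mul_aeval R T f
  obtain ⟨c, g', hc, -, hg⟩ := exists_aeval_eq_algebraMap_mul_aeval R T g
  refine ⟨C c * f', C b * g', (natDegree_C_mul_le _ _).trans hdeg, ?_⟩
  have hbc : algebraMap R E b * algebraMap R E c ≠ 0 := by
    simp only [Ne, mul_eq_zero, FaithfulSMul.algebraMap_eq_zero_iff, hb, hc, or_self,
      not_false_eq_true]
  rw [map_mul, map_mul, aeval_C, aeval_C, hf, hg, ← mul_assoc, ← mul_assoc,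
    mul_comm (algebraMap R E c), mul_div_mul_left _ _ hbc]

end Fraction

section SimpleExtension

variable {E : Type*} [Field E] {F : Subfield E} {T x : E}

theorem mem_subfieldClosure_union_singleton :
    x ∈ Subfield.closure (↑F ∪ {T}) ↔ ∃ f g : F[X], x = aeval T f / aeval T g := by
  rw [← IntermediateField.mem_adjoin_simple_iff F x, ← IntermediateField.mem_toSubfield,
    IntermediateField.adjoin_toSubfield, show Set.range (algebraMap F E) = F from Subtype.range_coe]

theorem mem_subringClosure_union_singleton :
    x ∈ Subring.closure (↑F ∪ {T}) ↔ ∃ f : F[X], x = aeval T f := by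
  have h : Subring.closure (↑F ∪ {T}) = (Algebra.adjoin F {T}).toSubring := by
    rw [Algebra.adjoin_eq_ring_closure, show Set.range (algebraMap F E) = F from Subtype.range_coe]
  rw [h, Subalgebra.mem_toSubring, Algebra.adjoin_singleton_eq_range_aeval, AlgHom.mem_range]
  simp only [eq_comm]

theorem exists_eq_aeval_div_aeval_coeff_zero_ne (hx : x ∈ Subfield.closure (↑F ∪ {T})) :
    ∃ f g : F[X], (f.coeff 0 ≠ 0 ∨ g.coeff 0 ≠ 0) ∧ aeval T g ≠ 0 ∧
      x = aeval T f / aeval T g := by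
  obtain ⟨f, g, rfl⟩ := mem_subfieldClosure_union_singleton.1 hx
  by_cases hg : aeval T g = 0
  · exact ⟨0, 1, Or.inr (by simp), by simp, by simp [hg]⟩
  have hg0 : g ≠ 0 := by rintro rfl; exact hg (map_zero _)
  obtain ⟨f', g', d, hrel, rfl, rfl⟩ := UniqueFactorizationMonoid.exists_reduced_factors' f g hg0
  rw [map_mul] at hg
  refine ⟨f', g', ?_, right_ne_zero_of_mul hg, ?_⟩
  · by_contra! h
    exact not_isUnit_X (hrel (X_dvd_iff.2 h.1) (X_dvd_iff.2 h.2))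
  · rw [map_mul, map_mul, mul_div_mul_left _ _ (left_ne_zero_of_mul hg)]

variable {Γ₀ : Type*} [LinearOrderedCommGroupWithZero Γ₀] {v : Valuation E Γ₀}

theorem valuation_aeval_le_one (hF : ∀ c ∈ F, v c ≤ 1) (hT : v T < 1) (f : F[X]) :
    v (aeval T f) ≤ 1 := by
  rw [aeval_eq_sum_range]
  refine v.map_sum_le fun i _ => ?_
  rw [Algebra.smul_def, map_mul, map_pow]
  exact mul_le_one' (hF _ (f.coeff i).2) (pow_le_one₀ zero_le hT.le)

theorem valuation_aeval_sub_coeff_zero_lt_one (hF : ∀ c ∈ F, v c ≤ 1) (hT : v T < 1) (f : F[X]) :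
    v (aeval T f - f.coeff 0) < 1 := by
  have hf : aeval T f = aeval T f.divX * T + f.coeff 0 := by
    conv_lhs => rw [← divX_mul_X_add f, map_add, map_mul, aeval_X, aeval_C]
    rfl
  rw [hf, add_sub_cancel_right, map_mul]
  exact mul_lt_one_of_nonneg_of_lt_one_right (valuation_aeval_le_one hF hT _) zero_le hT

theorem valuation_eq_one_of_mem (hF : ∀ c ∈ F, v c ≤ 1) {c : E} (hc : c ∈ F) (hc0 : c ≠ 0) :
    v c = 1 := by
  refine (hF c hc).antisymm ?_
  have := hF c⁻¹ (F.inv_mem hc)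
  rwa [map_inv₀, inv_le_one₀ (by simpa [zero_lt_iff] using hc0)] at this

theorem eq_of_valuation_sub_lt_one (hF : ∀ c ∈ F, v c ≤ 1) {c d : E} (hc : c ∈ F) (hd : d ∈ F)
    (hxc : v (x - c) < 1) (hxd : v (x - d) < 1) : c = d := by
  by_contra hcd
  refine (v.map_sub_lt hxd hxc).ne ?_
  rw [sub_sub_sub_cancel_left]
  exact valuation_eq_one_of_mem hF (F.sub_mem hc hd) (sub_ne_zero.2 hcd)

theorem valuation_aeval_eq_one_iff (hF : ∀ c ∈ F, v c ≤ 1) (hT : v T < 1) {f : F[X]} :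
    v (aeval T f) = 1 ↔ f.coeff 0 ≠ 0 := by
  have h := valuation_aeval_sub_coeff_zero_lt_one hF hT f
  constructor
  · intro h1 h0
    simp [h0, h1] at h
  · intro h0
    have h1 := valuation_eq_one_of_mem hF (f.coeff 0).2 (by simpa using h0)
    rw [← h1] at h ⊢
    simpa using v.map_add_eq_of_lt_left h

theorem valuation_le_one_iff_exists_aeval_div_aeval (hF : ∀ c ∈ F, v c ≤ 1) (hT : v T < 1)
    (hx : x ∈ Subfield.closure (↑F ∪ {T})) :
    v x ≤ 1 ↔ ∃ f g : F[X], g.coeff 0 ≠ 0 ∧ x = aeval T f / aeval T g := by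
  constructor
  · intro hvx
    obtain ⟨f, g, hfg, hg0, rfl⟩ := exists_eq_aeval_div_aeval_coeff_zero_ne hx
    refine ⟨f, g, fun hg => ?_, rfl⟩
    have hf := (valuation_aeval_eq_one_iff hF hT).2 (hfg.resolve_right (not_not.2 hg))
    have hg' := valuation_aeval_sub_coeff_zero_lt_one hF hT g
    rw [hg, ZeroMemClass.coe_zero, sub_zero] at hg'
    rw [map_div₀, hf, div_le_one₀ (by simpa [zero_lt_iff] using hg0)] at hvx
    exact hvx.not_gt hg'
  · rintro ⟨f, g, hg, rfl⟩
    rw [map_div₀, (valuation_aeval_eq_one_iff hF hT).2 hg, div_one]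
    exact valuation_aeval_le_one hF hT f

theorem exists_mem_subringClosure_aeval_eq_mul_iff (hF : ∀ c ∈ F, v c ≤ 1) (hT : v T < 1)
    {f : F[X]} :
    (∃ h ∈ Subring.closure (↑F ∪ {T}), aeval T f = T * h) ↔ f.coeff 0 = 0 := by
  constructor
  · rintro ⟨h, hh, hfh⟩
    by_contra hf
    obtain ⟨p, rfl⟩ := mem_subringClosure_union_singleton.1 hh
    have hv := (valuation_aeval_eq_one_iff hF hT).2 hf
    rw [hfh, map_mul] at hv
    exact hv.not_lt
      (mul_lt_one_of_nonneg_of_lt_one_left zero_le hT (valuation_aeval_le_one hF hT p))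
  · intro hf
    refine ⟨aeval T f.divX, mem_subringClosure_union_singleton.2 ⟨_, rfl⟩, ?_⟩
    conv_lhs => rw [← divX_mul_X_add f, hf, C_0, add_zero, map_mul, aeval_X, mul_comm]

theorem exists_mem_valuation_sub_lt_one (hF : ∀ c ∈ F, v c ≤ 1) (hT : v T < 1)
    (hx : x ∈ Subfield.closure (↑F ∪ {T})) (hvx : v x ≤ 1) : ∃ c ∈ F, v (x - c) < 1 := by
  obtain ⟨f, g, hg, rfl⟩ := (valuation_le_one_iff_exists_aeval_div_aeval hF hT hx).1 hvx
  have hvg := (valuation_aeval_eq_one_iff hF hT).2 hg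
  have hg' : (g.coeff 0 : E) ≠ 0 := by simpa using hg
  have hgT : aeval T g ≠ 0 := fun h => by simp [h] at hvg
  refine ⟨f.coeff 0 / g.coeff 0, F.div_mem (f.coeff 0).2 (g.coeff 0).2, ?_⟩
  have hcoeff : (C (g.coeff 0) * f - C (f.coeff 0) * g).coeff 0 = 0 := by
    simp only [coeff_sub, mul_coeff_zero, coeff_C_zero]
    ring
  have hsub : aeval T f / aeval T g - f.coeff 0 / g.coeff 0 =
      (aeval T (C (g.coeff 0) * f - C (f.coeff 0) * g)) / (aeval T g * g.coeff 0) := by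
    rw [map_sub, map_mul, map_mul, aeval_C, aeval_C, div_sub_div _ _ hgT hg']
    change _ = (g.coeff 0 * aeval T f - f.coeff 0 * aeval T g) / (aeval T g * g.coeff 0)
    ring
  have hlt := valuation_aeval_sub_coeff_zero_lt_one hF hT (C (g.coeff 0) * f - C (f.coeff 0) * g)
  rw [hcoeff, ZeroMemClass.coe_zero, sub_zero] at hlt
  rwa [hsub, map_div₀, map_mul, hvg, valuation_eq_one_of_mem hF (g.coeff 0).2 hg', mul_one, div_one]

end SimpleExtension

section ValuationRingOf

variable {E : Type*} [Field E] {W : Subring E} {L : Subfield E} {T x : E}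

/-- `W` is a valuation ring with fraction field `L`, both living inside a larger field. -/
structure IsValuationRingOf (W : Subring E) (L : Subfield E) : Prop where
  subset : (W : Set E) ⊆ L
  mem_or_inv_mem : ∀ x ∈ L, x ∈ W ∨ x⁻¹ ∈ W

/-- The algebra structure on a field over a subring of it. -/
abbrev subringAlgebra (h : (W : Set E) ⊆ L) : Algebra W L :=
  (W.subtype.codRestrict L fun x => h x.2).toAlgebra

namespace IsValuationRingOf

theorem of_inf (hW : ∀ x ∈ L, x ∈ W ∨ x⁻¹ ∈ W) : IsValuationRingOf (W ⊓ L.toSubring) L :=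
  ⟨fun _ hx => hx.2, fun x hx => (hW x hx).imp (⟨·, hx⟩) (⟨·, L.inv_mem hx⟩)⟩

theorem isFractionRing (h : IsValuationRingOf W L) :
    let _ := subringAlgebra h.subset
    IsFractionRing W L := by
  let _ := subringAlgebra h.subset
  have : FaithfulSMul W L := (faithfulSMul_iff_algebraMap_injective W L).2 fun a b hab =>
    Subtype.ext (congrArg ((↑) : L → E) hab)
  refine IsFractionRing.of_field W L fun z => ?_
  rcases h.mem_or_inv_mem z z.2 with hz | hz
  · exact ⟨⟨z, hz⟩, 1, by rw [map_one, div_one]; rfl⟩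
  · exact ⟨1, ⟨_, hz⟩, by rw [map_one, one_div]; exact (inv_inv z).symm⟩

theorem valuationRing (h : IsValuationRingOf W L) : ValuationRing W := by
  let _ := subringAlgebra h.subset
  have := h.isFractionRing
  refine (ValuationRing.iff_isInteger_or_isInteger W L).2 fun z => ?_
  exact (h.mem_or_inv_mem z z.2).imp (fun hz => ⟨⟨z, hz⟩, rfl⟩) fun hz => ⟨⟨_, hz⟩, rfl⟩

theorem exists_aeval_div_aeval_eq (h : IsValuationRingOf W L) (T : E) (f g : L[X]) :
    ∃ f' g' : W[X], f'.natDegree ≤ f.natDegree ∧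
      aeval T f / aeval T g = aeval T f' / aeval T g' := by
  let _ := subringAlgebra h.subset
  have := h.isFractionRing
  have : IsScalarTower W L E := .of_algebraMap_eq fun _ => rfl
  exact Tower.exists_aeval_div_aeval_eq W T f g

theorem transcendental (h : IsValuationRingOf W L) (hT : Transcendental L T) :
    Transcendental W T := by
  let _ := subringAlgebra h.subset
  have := h.isFractionRing
  have : IsScalarTower W L E := .of_algebraMap_eq fun _ => rfl
  exact hT.restrictScalars (IsFractionRing.injective W L)

theorem mem_or_inv_mem_nagataRing (h : IsValuationRingOf W L)
    (hx : x ∈ Subfield.closure (↑L ∪ {T})) :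
    x ∈ nagataRing W T ∨ x⁻¹ ∈ nagataRing W T := by
  have := h.valuationRing
  obtain ⟨f, g, rfl⟩ := mem_subfieldClosure_union_singleton.1 hx
  obtain ⟨f', g', -, hfg⟩ := h.exists_aeval_div_aeval_eq T f g
  rw [hfg]
  exact aeval_div_aeval_mem_or_inv_mem_nagataRing f' g'

theorem inv_one_add_div_pow_mem_nagataRing (h : IsValuationRingOf W L)
    (hT : Transcendental L T) {f g : L[X]} (hx : x = aeval T f / aeval T g) {N : ℕ}
    (hN : f.natDegree < N) :
    (1 + x / T ^ N)⁻¹ ∈ nagataRing W T ∧ x * (1 + x / T ^ N)⁻¹ ∈ nagataRing W T := by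
  have := h.valuationRing
  obtain ⟨f', g', hdeg, hfg⟩ := h.exists_aeval_div_aeval_eq T f g
  exact Tower.inv_one_add_div_pow_mem_nagataRing (h.transcendental hT) (hx.trans hfg)
    (hdeg.trans_lt hN)

theorem mem_of_mem_nagataRing (h : IsValuationRingOf W L) (hT : Transcendental L T)
    (hx : x ∈ L) (hxT : x ∈ nagataRing W T) : x ∈ W := by
  by_contra hxW
  have hinv : x⁻¹ ∈ W := (h.mem_or_inv_mem x hx).resolve_left hxW
  have hx0 : x ≠ 0 := fun h0 => hxW (h0 ▸ W.zero_mem)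
  obtain ⟨b, hb⟩ := (isUnit_of_inv_mem_nagataRing (R := W) (a := ⟨x⁻¹, hinv⟩) (h.transcendental hT)
    (by change x⁻¹⁻¹ ∈ _; rwa [inv_inv])
    fun h0 => hx0 (inv_eq_zero.1 (congrArg Subtype.val h0))).exists_right_inv
  have hb' : x⁻¹ * b = 1 := congrArg Subtype.val hb
  rw [inv_mul_eq_one₀ hx0] at hb'
  exact hxW (hb' ▸ b.2)

end IsValuationRingOf

end ValuationRingOf

section Composite

variable {E Γ₀ : Type*} [Field E] [LinearOrderedCommGroupWithZero Γ₀] (v : Valuation E Γ₀)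

/-- The preimage, in the valuation ring of `v`, of the image of `R` in the residue field of `v`.
When `R` is a subring of a field of representatives, this is `R + m` with `m` the maximal ideal
of `v`, and when `R` is moreover a valuation ring it is the composite of the two valuations. -/
def compositeRing (R : Subring E) : Subring E where
  carrier := {x | ∃ c ∈ R, v c ≤ 1 ∧ v (x - c) < 1}
  zero_mem' := ⟨0, R.zero_mem, by simp⟩
  one_mem' := ⟨1, R.one_mem, by simp⟩
  neg_mem' := by
    rintro x ⟨c, hc, hvc, hxc⟩
    exact ⟨-c, R.neg_mem hc, by rwa [v.map_neg], by rwa [← neg_sub', v.map_neg]⟩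
  add_mem' := by
    rintro x y ⟨c, hc, hvc, hxc⟩ ⟨d, hd, hvd, hyd⟩
    exact ⟨c + d, R.add_mem hc hd, v.map_add_le hvc hvd,
      by rw [add_sub_add_comm]; exact v.map_add_lt hxc hyd⟩
  mul_mem' := by
    rintro x y ⟨c, hc, hvc, hxc⟩ ⟨d, hd, hvd, hyd⟩
    refine ⟨c * d, R.mul_mem hc hd, by rw [map_mul]; exact mul_le_one' hvc hvd, ?_⟩
    have hvy : v y ≤ 1 := by simpa using v.map_add_le hyd.le hvd
    rw [show x * y - c * d = (x - c) * y + c * (y - d) by ring]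
    refine v.map_add_lt ?_ ?_ <;> rw [map_mul]
    · exact mul_lt_one_of_nonneg_of_lt_one_left zero_le hxc hvy
    · exact mul_lt_one_of_nonneg_of_lt_one_right hvc zero_le hyd

variable {v} {R : Subring E} {F k : Subfield E} {T x : E}

theorem valuation_le_one_of_mem_compositeRing (hx : x ∈ compositeRing v R) : v x ≤ 1 := by
  obtain ⟨c, -, hvc, hxc⟩ := hx
  simpa using v.map_add_le hxc.le hvc

theorem mem_compositeRing_of_valuation_lt_one (hx : v x < 1) : x ∈ compositeRing v R :=
  ⟨0, R.zero_mem, by simp, by simpa using hx⟩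

theorem valuation_inv_sub_inv_lt_one {c : E} (hvc : v c = 1) (hxc : v (x - c) < 1) :
    v (x⁻¹ - c⁻¹) < 1 := by
  have hvx : v x = 1 := by
    rw [← hvc]
    simpa only [add_sub_cancel] using v.map_add_eq_of_lt_left (hxc.trans_eq hvc.symm)
  have hx0 : x ≠ 0 := v.ne_zero_iff.1 (hvx ▸ one_ne_zero)
  have hc0 : c ≠ 0 := v.ne_zero_iff.1 (hvc ▸ one_ne_zero)
  rwa [inv_sub_inv hx0 hc0, map_div₀, map_mul, hvx, hvc, mul_one, div_one, v.map_sub_swap]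

theorem inv_mem_compositeRing (hk : ∀ c ∈ k, v c ≤ 1) (hx : x ∈ compositeRing v k.toSubring)
    (hvx : v x = 1) : x⁻¹ ∈ compositeRing v k.toSubring := by
  obtain ⟨c, hc, -, hxc⟩ := hx
  have hc0 : c ≠ 0 := by
    rintro rfl
    rw [sub_zero] at hxc
    exact hxc.ne hvx
  exact ⟨c⁻¹, k.inv_mem hc, hk _ (k.inv_mem hc),
    valuation_inv_sub_inv_lt_one (valuation_eq_one_of_mem hk hc hc0) hxc⟩

theorem mem_or_inv_mem_compositeRing (hF : ∀ c ∈ F, v c ≤ 1) (hR : ∀ c ∈ F, c ∈ R ∨ c⁻¹ ∈ R)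
    (hx : v x ≤ 1 → ∃ c ∈ F, v (x - c) < 1) :
    x ∈ compositeRing v R ∨ x⁻¹ ∈ compositeRing v R := by
  rcases lt_or_ge 1 (v x) with hvx | hvx
  · exact Or.inr (mem_compositeRing_of_valuation_lt_one (by simpa using inv_lt_one_of_one_lt₀ hvx))
  obtain ⟨c, hc, hxc⟩ := hx hvx
  obtain rfl | hc0 := eq_or_ne c 0
  · exact Or.inl (mem_compositeRing_of_valuation_lt_one (by simpa using hxc))
  exact (hR c hc).imp (fun h => ⟨c, h, hF c hc, hxc⟩) fun h => ⟨c⁻¹, h, hF _ (F.inv_mem hc),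
    valuation_inv_sub_inv_lt_one (valuation_eq_one_of_mem hF hc hc0) hxc⟩

theorem exists_isValuationRingOf_notMem [IsIntegrallyClosedIn k.toSubring E] (hkF : k ≤ F)
    (hF : ∀ c ∈ F, v c ≤ 1) (hT : v T < 1) (hxT : x ∈ Subfield.closure (↑F ∪ {T}))
    (hx : x ∉ compositeRing v k.toSubring) :
    ∃ W : Subring E, compositeRing v k.toSubring ⊓ (Subfield.closure (↑F ∪ {T})).toSubring ≤ W ∧
      IsValuationRingOf W (Subfield.closure (↑F ∪ {T})) ∧ x ∉ W := by
  suffices h : ∃ S : Subring E, compositeRing v k.toSubring ≤ S ∧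
      (∀ y ∈ Subfield.closure (↑F ∪ {T}), y ∈ S ∨ y⁻¹ ∈ S) ∧ x ∉ S by
    obtain ⟨S, hkS, hS, hxS⟩ := h
    exact ⟨_, inf_le_inf_right _ hkS, .of_inf hS, fun h => hxS h.1⟩
  rcases lt_or_ge 1 (v x) with hvx | hvx
  · refine ⟨v.integer, fun y hy => valuation_le_one_of_mem_compositeRing hy, fun y _ => ?_,
      hvx.not_ge⟩
    exact v.valuationSubring.mem_or_inv_mem y
  obtain ⟨c, hc, hxc⟩ := exists_mem_valuation_sub_lt_one hF hT hxT hvx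
  have hck : c ∉ k.toSubring := fun h => hx ⟨c, h, hF c hc, hxc⟩
  obtain ⟨O, hkO, hcO⟩ := Subring.exists_le_valuationSubring_of_isIntegrallyClosedIn hck
  refine ⟨compositeRing v (O.toSubring ⊓ F.toSubring), ?_, fun y hy => ?_, ?_⟩
  · rintro y ⟨d, hd, hyd⟩
    exact ⟨d, ⟨hkO hd, hkF hd⟩, hyd⟩
  · refine mem_or_inv_mem_compositeRing hF (fun d hd => ?_)
      (exists_mem_valuation_sub_lt_one hF hT hy)
    exact (O.mem_or_inv_mem d).imp (⟨·, hd⟩) (⟨·, F.inv_mem hd⟩)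
  · rintro ⟨d, ⟨hdO, hdF⟩, -, hxd⟩
    exact hcO (eq_of_valuation_sub_lt_one hF hc hdF hxc hxd ▸ hdO)

end Composite

section PositiveIdeal

variable {E Γ₀ : Type*} [Field E] [LinearOrderedCommGroupWithZero Γ₀] (v : Valuation E Γ₀)
  {A : Subring E}

/-- The ideal of the elements `a` of `A` with `v a < 1`, where `v` is at most `1` on `A`. -/
def positiveIdeal (hA : A ≤ v.integer) : Ideal A :=
  (v.ltIdeal 1).comap (Subring.inclusion hA)

variable {v} {hA : A ≤ v.integer}

theorem mem_positiveIdeal {a : A} : a ∈ positiveIdeal v hA ↔ v a < 1 :=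
  Iff.rfl

theorem positiveIdeal_isMaximal (hinv : ∀ a ∈ A, v a = 1 → a⁻¹ ∈ A) :
    (positiveIdeal v hA).IsMaximal := by
  refine Ideal.isMaximal_iff.2 ⟨fun h => (mem_positiveIdeal.1 h).ne v.map_one, ?_⟩
  intro J a _ haM haJ
  have hva : v a = 1 := (hA a.2).antisymm (not_lt.1 haM)
  have ha0 : (a : E) ≠ 0 := v.ne_zero_iff.1 (hva ▸ one_ne_zero)
  convert J.mul_mem_left ⟨_, hinv a a.2 hva⟩ haJ
  exact Subtype.ext (inv_mul_cancel₀ ha0).symm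

theorem exists_dvd_pow_of_mem_positiveIdeal [MulArchimedean Γ₀] {L : Subfield E}
    (hAL : A ≤ L.toSubring) (hLA : ∀ x ∈ L, v x < 1 → x ∈ A) {m : A} (hm : m ∈ positiveIdeal v hA)
    {a : A} (ha : a ≠ 0) : ∃ N, a ∣ m ^ N := by
  have ha0 : (a : E) ≠ 0 := Subtype.coe_ne_coe.2 ha
  have hva0 : v a ≠ 0 := v.ne_zero_iff.2 ha0
  obtain ⟨N, hN⟩ := exists_pow_lt₀ (mem_positiveIdeal.1 hm) (Units.mk0 (v a) hva0)
  refine ⟨N, ⟨(m : E) ^ N / a, hLA _ (L.div_mem (L.pow_mem (hAL m.2) N) (hAL a.2)) ?_⟩,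
    Subtype.ext (mul_div_cancel₀ _ ha0).symm⟩
  rwa [map_div₀, map_pow, div_lt_one₀ (zero_lt_iff.2 hva0)]

end PositiveIdeal

section PurelyTranscendental

open IntermediateField

variable {k E ι : Type*} [Field k] [Field E] [Algebra k E] {x : ι → E}

theorem mem_range_algebraMap_of_isIntegral_fractionRing {y : FractionRing (MvPolynomial ι k)}
    (hy : IsIntegral k y) : y ∈ (algebraMap k (FractionRing (MvPolynomial ι k))).range := by
  obtain ⟨p, rfl⟩ := IsIntegrallyClosed.isIntegral_iff.1 (hy.tower_top (A := MvPolynomial ι k))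
  have hp : IsIntegral k p :=
    (isIntegral_algebraMap_iff (IsFractionRing.injective _ _)).1 hy
  obtain rfl | hp0 := eq_or_ne p 0
  · exact ⟨0, by simp only [map_zero]⟩
  obtain ⟨c, -, rfl⟩ := MvPolynomial.isUnit_iff_eq_C_of_isReduced.1 (hp.isUnit hp0)
  exact ⟨c, IsScalarTower.algebraMap_apply k (MvPolynomial ι k) _ c⟩

theorem isIntegrallyClosedIn_of_algebraicIndependent (hx : AlgebraicIndependent k x)
    (htop : adjoin k (Set.range x) = ⊤) : IsIntegrallyClosedIn k E := by
  refine isIntegrallyClosedIn_iff.2 ⟨(algebraMap k E).injective, fun {y} hy => ?_⟩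
  let e := hx.aevalEquivField.trans ((equivOfEq htop).trans topEquiv)
  obtain ⟨c, hc⟩ := mem_range_algebraMap_of_isIntegral_fractionRing (hy.map e.symm)
  exact ⟨c, by rw [← e.apply_symm_apply y, ← hc, e.commutes]⟩

open scoped IntermediateField.algebraAdjoinAdjoin in
theorem algebraicIndependent_adjoin_compl (hx : AlgebraicIndependent k x) (s : Set ι) :
    AlgebraicIndependent (adjoin k (x '' s)).toSubfield fun i : ↥sᶜ => x i :=
  (hx.adjoin_of_disjoint disjoint_compl_right).extendScalars (adjoin k (x '' s))

theorem adjoin_adjoin_compl_eq_top (htop : adjoin k (Set.range x) = ⊤) (s : Set ι) :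
    adjoin (adjoin k (x '' s)).toSubfield (Set.range fun i : ↥sᶜ => x i) = ⊤ := by
  have h : adjoin (adjoin k (x '' s)) (Set.range fun i : ↥sᶜ => x i) = ⊤ := by
    rw [← restrictScalars_eq_top_iff (K := k), adjoin_adjoin_left, ← htop,
      show (fun i : ↥sᶜ => x i) = x ∘ Subtype.val from rfl, Set.range_comp, Subtype.range_coe,
      ← Set.image_union, Set.union_compl_self, Set.image_univ]
  exact h

theorem isIntegrallyClosedIn_adjoin (hx : AlgebraicIndependent k x)
    (htop : adjoin k (Set.range x) = ⊤) (s : Set ι) :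
    IsIntegrallyClosedIn (adjoin k (x '' s)).toSubfield.toSubring E :=
  isIntegrallyClosedIn_of_algebraicIndependent (algebraicIndependent_adjoin_compl hx s)
    (adjoin_adjoin_compl_eq_top htop s)

theorem transcendental_adjoin_compl_singleton (hx : AlgebraicIndependent k x) (i : ι) :
    Transcendental (adjoin k (x '' {i}ᶜ)).toSubfield (x i) :=
  (algebraicIndependent_adjoin_compl hx {i}ᶜ).transcendental ⟨i, by simp⟩

theorem adjoin_adjoin_compl_singleton_eq_top (htop : adjoin k (Set.range x) = ⊤) (i : ι) :
    (adjoin k (x '' {i}ᶜ)).toSubfield⟮x i⟯ = ⊤ := by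
  have h := adjoin_adjoin_compl_eq_top htop {i}ᶜ
  have hrange : (Set.range fun j : ↥({i}ᶜᶜ : Set ι) => x j) = {x i} := by
    ext y
    simp [eq_comm]
  rwa [hrange] at h

theorem transcendental_of_le {F F' : Subfield E} (h : F ≤ F') {T : E}
    (hT : Transcendental F' T) : Transcendental F T := by
  let _ := (Subfield.inclusion h).toAlgebra
  have : IsScalarTower F F' E := .of_algebraMap_eq fun _ => rfl
  exact hT.restrictScalars (Subfield.inclusion h).injective

theorem transcendental_add_of_mem {F : Subfield E} {T a : E} (ha : a ∈ F)
    (hT : Transcendental F T) : Transcendental F (T + a) := fun h => hT <| by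
  have h' := h.sub (isAlgebraic_algebraMap (⟨a, ha⟩ : F))
  rwa [Subfield.algebraMap_ofSubfield, Subfield.coe_subtype, add_sub_cancel_right] at h'

theorem adjoin_range_X_eq_top : adjoin k (Set.range fun i => algebraMap (MvPolynomial ι k)
    (FractionRing (MvPolynomial ι k)) (MvPolynomial.X i)) = ⊤ := by
  refine eq_top_iff.2 fun y _ => ?_
  have hp (p : MvPolynomial ι k) : algebraMap _ (FractionRing (MvPolynomial ι k)) p ∈
      adjoin k (Set.range fun i => algebraMap (MvPolynomial ι k) _ (MvPolynomial.X i)) := by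
    induction p using MvPolynomial.induction_on with
    | C a => exact IntermediateField.algebraMap_mem _ a
    | add p q hp hq => rw [map_add]; exact add_mem hp hq
    | mul_X p i hp => rw [map_mul]; exact mul_mem hp (subset_adjoin _ _ ⟨i, rfl⟩)
  obtain ⟨a, b, -, rfl⟩ := IsFractionRing.div_surjective (A := MvPolynomial ι k) y
  exact div_mem (hp a) (hp b)

/-- The isomorphism with the rational function field of a field `E` generated over `k` by a
transcendental element `T`; it sends the indeterminate to `T`. -/
noncomputable def ratFuncEquiv {T : E} (hT : Transcendental k T) (htop : k⟮T⟯ = ⊤) :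
    RatFunc k ≃ₐ[k] E :=
  (RatFunc.algEquivOfTranscendental T hT).trans ((equivOfEq htop).trans topEquiv)

variable {T : E} (hT : Transcendental k T) (htop : k⟮T⟯ = ⊤)

theorem ratFuncEquiv_X : ratFuncEquiv hT htop RatFunc.X = T :=
  RatFunc.algEquivOfTranscendental_X T hT

/-- The `T`-adic valuation of the rational function field `k(T)`, realized on a field `E` generated
over `k` by a transcendental element `T`. -/
noncomputable def adicValuation : Valuation E ℤᵐ⁰ :=
  ((Polynomial.idealX k).valuation (RatFunc k)).comap (ratFuncEquiv hT htop).symm.toRingHom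

theorem adicValuation_self : adicValuation hT htop T = WithZero.exp (-1) := by
  rw [← Polynomial.valuation_X_eq_neg_one (K := k),
    ← (ratFuncEquiv hT htop).symm_apply_eq.2 (ratFuncEquiv_X hT htop).symm]
  rfl

theorem adicValuation_algebraMap_le_one (c : k) : adicValuation hT htop (algebraMap k E c) ≤ 1 := by
  change (Polynomial.idealX k).valuation (RatFunc k)
    ((ratFuncEquiv hT htop).symm (algebraMap k E c)) ≤ 1
  rw [AlgEquiv.commutes, IsScalarTower.algebraMap_apply k k[X] (RatFunc k)]
  exact IsDedekindDomain.HeightOneSpectrum.valuation_le_one _ _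

end PurelyTranscendental

section Fields

open IntermediateField

variable {k0 : Type} [Field k0] {r n : ℕ}

variable (k0) in
/-- All the indeterminates of the tower, as one family in the ambient field. -/
noncomputable def ambVar (i : TowerVars r) : Amb k0 r :=
  algebraMap (MvPolynomial (TowerVars r) k0) (Amb k0 r) (MvPolynomial.X i)

theorem algebraicIndependent_ambVar : AlgebraicIndependent k0 (ambVar k0 (r := r)) :=
  (MvPolynomial.algebraicIndependent_X (TowerVars r) k0).map'
    (f := IsScalarTower.toAlgHom k0 (MvPolynomial (TowerVars r) k0) (Amb k0 r))
    (IsFractionRing.injective _ _)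

variable (k0) in
/-- The subfield of the ambient field generated by all the indeterminates except the `i`-th. -/
noncomputable def fieldOmitting (i : TowerVars r) : Subfield (Amb k0 r) :=
  (adjoin k0 (ambVar k0 '' {i}ᶜ)).toSubfield

theorem transcendental_ambVar (i : TowerVars r) :
    Transcendental (fieldOmitting k0 i) (ambVar k0 i) :=
  transcendental_adjoin_compl_singleton (k := k0) (x := ambVar k0) algebraicIndependent_ambVar i

theorem adjoin_fieldOmitting_ambVar (i : TowerVars r) :
    (fieldOmitting k0 i)⟮ambVar k0 i⟯ = ⊤ :=
  adjoin_adjoin_compl_singleton_eq_top adjoin_range_X_eq_top i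

theorem ambVar_mem_fieldOmitting {i j : TowerVars r} (h : j ≠ i) :
    ambVar k0 j ∈ fieldOmitting k0 i :=
  subset_adjoin _ _ ⟨j, h, rfl⟩

theorem baseSet_eq_range : baseSet k0 r = Set.range (algebraMap k0 (Amb k0 r)) :=
  congrArg Set.range (funext fun c =>
    (IsScalarTower.algebraMap_apply k0 (MvPolynomial (TowerVars r) k0) _ c).symm)

theorem kfld_eq_toSubfield_adjoin : kfld k0 r n =
    (adjoin k0 (ambVar k0 '' (Sum.inl '' Set.Icc 1 n : Set (TowerVars r)))).toSubfield := by
  rw [kfld, baseSet_eq_range, adjoin_toSubfield]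
  congr 2
  ext y
  simp [ambVar, ambX, and_assoc, eq_comm]

instance isIntegrallyClosedIn_kfld : IsIntegrallyClosedIn (kfld k0 r n).toSubring (Amb k0 r) := by
  rw [kfld_eq_toSubfield_adjoin]
  exact isIntegrallyClosedIn_adjoin (k := k0) (x := ambVar k0) algebraicIndependent_ambVar
    adjoin_range_X_eq_top _

variable {S : Subfield (Amb k0 r)}

theorem kfld_le_iff :
    kfld k0 r n ≤ S ↔ baseSet k0 r ⊆ S ∧ ∀ i, 1 ≤ i → i ≤ n → ambX k0 r i ∈ S := by
  rw [kfld, Subfield.closure_le, Set.union_subset_iff]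
  refine and_congr_right fun _ => ⟨fun h i hi hin => h ⟨i, hi, hin, rfl⟩, ?_⟩
  rintro h _ ⟨i, hi, hin, rfl⟩
  exact h i hi hin

theorem Ffld_le_iff :
    Ffld k0 r n ≤ S ↔ kfld k0 r n ≤ S ∧ ∀ i, ambZ k0 r i ∈ S := by
  rw [Ffld, Subfield.closure_le, Set.union_subset_iff, Set.range_subset_iff]
  rfl

theorem Kfld_le_iff : Kfld k0 r n ≤ S ↔ Ffld k0 r n ≤ S ∧ ambY k0 r ∈ S := by
  rw [Kfld, Subfield.closure_le, Set.union_subset_iff, Set.singleton_subset_iff]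
  rfl

theorem kfld_le_Ffld : kfld k0 r n ≤ Ffld k0 r n := (Ffld_le_iff.1 le_rfl).1

theorem Ffld_le_Kfld : Ffld k0 r n ≤ Kfld k0 r n := (Kfld_le_iff.1 le_rfl).1

theorem ambY_mem_Kfld : ambY k0 r ∈ Kfld k0 r n := (Kfld_le_iff.1 le_rfl).2

theorem ambX_mem_kfld {i : ℕ} (hi : 1 ≤ i) (hin : i ≤ n) : ambX k0 r i ∈ kfld k0 r n :=
  (kfld_le_iff.1 le_rfl).2 i hi hin

theorem kfld_mono : Monotone (kfld k0 r) := fun _ _ h =>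
  kfld_le_iff.2 ⟨(kfld_le_iff.1 le_rfl).1, fun _ hi hin => ambX_mem_kfld hi (hin.trans h)⟩

theorem Ffld_mono : Monotone (Ffld k0 r) := fun _ _ h =>
  Subfield.closure_mono (Set.union_subset_union_left _ (kfld_mono h))

theorem Kfld_mono : Monotone (Kfld k0 r) := fun _ _ h =>
  Subfield.closure_mono (Set.union_subset_union_left _ (Ffld_mono h))

theorem baseSet_subset_fieldOmitting (i : TowerVars r) :
    baseSet k0 r ⊆ fieldOmitting k0 i := by
  rw [baseSet_eq_range]
  rintro _ ⟨c, rfl⟩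
  exact IntermediateField.algebraMap_mem _ c

theorem Ffld_le_fieldOmitting_Y :
    Ffld k0 r n ≤ fieldOmitting k0 (Sum.inr (Sum.inl ())) :=
  Ffld_le_iff.2 ⟨kfld_le_iff.2 ⟨baseSet_subset_fieldOmitting _, fun _ _ _ =>
    ambVar_mem_fieldOmitting (by simp)⟩, fun _ => ambVar_mem_fieldOmitting (by simp)⟩

theorem Kfld_le_fieldOmitting_X {m : ℕ} (h : n < m) :
    Kfld k0 r n ≤ fieldOmitting k0 (Sum.inl m) :=
  Kfld_le_iff.2 ⟨Ffld_le_iff.2 ⟨kfld_le_iff.2 ⟨baseSet_subset_fieldOmitting _, fun _ _ hin =>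
    ambVar_mem_fieldOmitting (by simpa using (hin.trans_lt h).ne)⟩,
    fun _ => ambVar_mem_fieldOmitting (by simp)⟩, ambVar_mem_fieldOmitting (by simp)⟩

theorem ambY_ne_zero : ambY k0 r ≠ 0 :=
  (algebraicIndependent_ambVar (k0 := k0) (r := r)).ne_zero _

theorem ambX'_eq_add_inv : ambX' k0 r n = ambX k0 r n + (ambY k0 r)⁻¹ := by
  rw [ambX', add_div, one_div, mul_div_cancel_left₀ (ambX k0 r n) ambY_ne_zero, add_comm]

theorem transcendental_ambX' {m : ℕ} (h : n < m) :
    Transcendental (Kfld k0 r n) (ambX' k0 r m) := by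
  have hX : Transcendental (Kfld k0 r n) (ambX k0 r m) :=
    transcendental_of_le (E := Amb k0 r) (F' := fieldOmitting k0 (Sum.inl m))
      (Kfld_le_fieldOmitting_X h) (transcendental_ambVar (Sum.inl m))
  rw [ambX'_eq_add_inv]
  exact transcendental_add_of_mem (E := Amb k0 r) (F := Kfld k0 r n) (inv_mem ambY_mem_Kfld) hX

theorem Kfld_succ (n : ℕ) :
    Kfld k0 r (n + 1) = Subfield.closure (↑(Kfld k0 r n) ∪ {ambX' k0 r (n + 1)}) := by
  refine le_antisymm ?_
    (Subfield.closure_le.2 (Set.union_subset ?_ (Set.singleton_subset_iff.2 ?_)))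
  · set S := Subfield.closure (↑(Kfld k0 r n) ∪ {ambX' k0 r (n + 1)})
    have hK : Kfld k0 r n ≤ S := fun _ h => Subfield.subset_closure (Or.inl h)
    have hX' : ambX' k0 r (n + 1) ∈ S := Subfield.subset_closure (Or.inr rfl)
    obtain ⟨hF, hY⟩ := Kfld_le_iff.1 hK
    obtain ⟨hk, hZ⟩ := Ffld_le_iff.1 hF
    obtain ⟨h0, hX⟩ := kfld_le_iff.1 hk
    refine Kfld_le_iff.2 ⟨Ffld_le_iff.2 ⟨kfld_le_iff.2 ⟨h0, fun i hi hin => ?_⟩, hZ⟩, hY⟩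
    obtain rfl | hin := hin.eq_or_lt
    · simpa [ambX'_eq_add_inv] using sub_mem hX' (inv_mem hY)
    · exact hX i hi (Nat.lt_succ_iff.1 hin)
  · exact Kfld_mono n.le_succ
  · rw [ambX'_eq_add_inv]
    exact add_mem (Ffld_le_Kfld (kfld_le_Ffld (ambX_mem_kfld (Nat.le_add_left 1 n) le_rfl)))
      (inv_mem ambY_mem_Kfld)

end Fields

section KroneckerFunctionRing

variable {k0 : Type} [Field k0] {r : ℕ} {W : Subring (Amb k0 r)} {L : Subfield (Amb k0 r)}
  {T x : Amb k0 r} {D : Set (Amb k0 r)}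

theorem unitContent_map_subtype_iff {q : W[X]} :
    unitContent k0 r W (q.map W.subtype) ↔ q.contentIdeal = ⊤ := by
  rw [Ideal.eq_top_iff_one]
  constructor
  · rintro ⟨t, u, hu, h⟩
    have h1 : (1 : W) = ∑ i ∈ t.attach, ⟨u i, hu i i.2⟩ * q.coeff i := by
      apply Subtype.ext
      rw [← W.subtype_apply, ← W.subtype_apply, map_sum, map_one, ← h, ← Finset.sum_attach]
      simp only [coeff_map, map_mul, Subring.subtype_apply]
    rw [h1]
    exact Ideal.sum_mem _ fun i _ => Ideal.mul_mem_left _ _ (coeff_mem_contentIdeal _ _)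
  · intro h
    have hcoeffs : (q.coeffs : Set W) ⊆ Set.range q.coeff := fun a ha => by
      obtain ⟨i, -, hi⟩ := mem_coeffs_iff.1 ha
      exact ⟨i, hi.symm⟩
    obtain ⟨c, hc⟩ := Finsupp.mem_ideal_span_range_iff_exists_finsupp.1
      (Ideal.span_mono hcoeffs (contentIdeal_def q ▸ h))
    refine ⟨c.support, fun i => c i, fun i _ => (c i).2, ?_⟩
    have h1 := congrArg W.subtype hc
    rw [Finsupp.sum, map_sum, map_one] at h1
    simpa only [coeff_map, map_mul, Subring.subtype_apply] using h1

theorem nagataSet_coe : nagataSet k0 r W T = nagataRing W T := by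
  have hlift {g : (Amb k0 r)[X]} (hg : ∀ i, g.coeff i ∈ (W : Set (Amb k0 r))) :
      ∃ q : W[X], q.map W.subtype = g :=
    (mem_lifts g).1 ((lifts_iff_coeff_lifts g).2 fun i => ⟨⟨_, hg i⟩, rfl⟩)
  ext x
  constructor
  · rintro ⟨f, g, hf, hg, hu, rfl⟩
    obtain ⟨p, rfl⟩ := hlift hf
    obtain ⟨q, rfl⟩ := hlift hg
    exact ⟨p, q, unitContent_map_subtype_iff.1 hu, by
      rw [eval_map, eval_map, aeval_def, aeval_def]; rfl⟩
  · rintro ⟨p, q, hq, rfl⟩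
    refine ⟨p.map W.subtype, q.map W.subtype, fun i => ?_, fun i => ?_,
      unitContent_map_subtype_iff.2 hq, ?_⟩
    · rw [coeff_map]; exact (p.coeff i).2
    · rw [coeff_map]; exact (q.coeff i).2
    · rw [eval_map, eval_map, aeval_def, aeval_def]; rfl

theorem mem_krSet_iff :
    x ∈ krSet k0 r D L T ↔
      ∀ W : Subring (Amb k0 r), D ⊆ W → IsValuationRingOf W L → x ∈ nagataRing W T := by
  rw [krSet, Set.mem_iInter₂]
  refine forall_congr' fun W => ?_
  rw [nagataSet_coe]
  exact ⟨fun h hD hW => h ⟨hD, hW.subset, hW.mem_or_inv_mem⟩, fun h hW => h hW.1 ⟨hW.2.1, hW.2.2⟩⟩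

end KroneckerFunctionRing

section YAdicValuation

variable {k0 : Type} [Field k0] {r n : ℕ} {x : Amb k0 r}

variable (k0 r) in
/-- The `Y`-adic valuation of the ambient field. It is trivial on each `Fₙ`, and its restriction to
`Kₙ` has valuation ring `Vₙ`. -/
noncomputable def yValuation : Valuation (Amb k0 r) ℤᵐ⁰ :=
  adicValuation (transcendental_ambVar (Sum.inr (Sum.inl ()))) (adjoin_fieldOmitting_ambVar _)

theorem yValuation_ambY : yValuation k0 r (ambY k0 r) = WithZero.exp (-1) :=
  adicValuation_self _ _

theorem yValuation_ambY_lt_one : yValuation k0 r (ambY k0 r) < 1 := by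
  rw [yValuation_ambY, ← WithZero.exp_zero, WithZero.exp_lt_exp]
  exact neg_one_lt_zero

theorem yValuation_le_one_of_mem_Ffld : ∀ c ∈ Ffld k0 r n, yValuation k0 r c ≤ 1 := fun c hc =>
  adicValuation_algebraMap_le_one (transcendental_ambVar (Sum.inr (Sum.inl ())))
    (adjoin_fieldOmitting_ambVar _) ⟨c, Ffld_le_fieldOmitting_Y hc⟩

theorem yValuation_le_one_of_mem_kfld : ∀ c ∈ kfld k0 r n, yValuation k0 r c ≤ 1 := fun c hc =>
  yValuation_le_one_of_mem_Ffld c (kfld_le_Ffld hc)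

theorem one_lt_yValuation_ambX' (hn : 1 ≤ n) : 1 < yValuation k0 r (ambX' k0 r n) := by
  have hY : 1 < yValuation k0 r (ambY k0 r)⁻¹ := by
    rw [map_inv₀, one_lt_inv₀ (zero_lt_iff.2 ((Valuation.ne_zero_iff _).2 ambY_ne_zero))]
    exact yValuation_ambY_lt_one
  have hX := (yValuation_le_one_of_mem_kfld (k0 := k0) (r := r) _
    (ambX_mem_kfld hn le_rfl)).trans_lt hY
  rwa [ambX'_eq_add_inv, Valuation.map_add_eq_of_lt_right _ hX]

theorem mem_Vset_iff : x ∈ Vset k0 r n ↔ x ∈ Kfld k0 r n ∧ yValuation k0 r x ≤ 1 := by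
  have hF := yValuation_le_one_of_mem_Ffld (k0 := k0) (r := r) (n := n)
  have hY := yValuation_ambY_lt_one (k0 := k0) (r := r)
  constructor
  · rintro ⟨_, hf, _, hg, hgY, rfl⟩
    obtain ⟨f, rfl⟩ := mem_subringClosure_union_singleton.1 hf
    obtain ⟨g, rfl⟩ := mem_subringClosure_union_singleton.1 hg
    have hx : aeval (ambY k0 r) f / aeval (ambY k0 r) g ∈ Kfld k0 r n :=
      mem_subfieldClosure_union_singleton.2 ⟨f, g, rfl⟩
    exact ⟨hx, (valuation_le_one_iff_exists_aeval_div_aeval hF hY hx).2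
      ⟨f, g, fun h => hgY ((exists_mem_subringClosure_aeval_eq_mul_iff hF hY).2 h), rfl⟩⟩
  · rintro ⟨hx, hvx⟩
    obtain ⟨f, g, hg, rfl⟩ := (valuation_le_one_iff_exists_aeval_div_aeval hF hY hx).1 hvx
    exact ⟨_, mem_subringClosure_union_singleton.2 ⟨f, rfl⟩, _,
      mem_subringClosure_union_singleton.2 ⟨g, rfl⟩,
      fun h => hg ((exists_mem_subringClosure_aeval_eq_mul_iff hF hY).1 h), rfl⟩

theorem mem_Mset_iff : x ∈ Mset k0 r n ↔ x ∈ Kfld k0 r n ∧ yValuation k0 r x < 1 := by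
  have hY := ambY_ne_zero (k0 := k0) (r := r)
  have hv (y : Amb k0 r) :
      yValuation k0 r (ambY k0 r * y) < 1 ↔ yValuation k0 r y ≤ 1 := by
    rw [map_mul, yValuation_ambY, ← WithZero.lt_mul_exp_iff_le one_ne_zero, one_mul,
      WithZero.exp_neg, inv_mul_lt_one₀ WithZero.exp_pos]
  constructor
  · rintro ⟨y, hy, rfl⟩
    obtain ⟨hyK, hvy⟩ := mem_Vset_iff.1 hy
    exact ⟨mul_mem ambY_mem_Kfld hyK, (hv y).2 hvy⟩
  · rintro ⟨hx, hvx⟩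
    rw [← mul_div_cancel₀ x hY, hv] at hvx
    exact ⟨_, mem_Vset_iff.2 ⟨div_mem hx ambY_mem_Kfld, hvx⟩, (mul_div_cancel₀ x hY).symm⟩

variable (k0 r n) in
/-- The ring `Aₙ` of the tower as a `Subring`, in terms of the `Y`-adic valuation. -/
noncomputable def Aring : Subring (Amb k0 r) :=
  compositeRing (yValuation k0 r) (kfld k0 r n).toSubring ⊓ (Kfld k0 r n).toSubring

theorem coe_Aring : (Aring k0 r n : Set (Amb k0 r)) = Aset k0 r n := by
  have hkK : kfld k0 r n ≤ Kfld k0 r n := kfld_le_Ffld.trans Ffld_le_Kfld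
  ext x
  constructor
  · rintro ⟨⟨c, hc, -, hxc⟩, hx⟩
    exact ⟨c, hc, x - c, mem_Mset_iff.2 ⟨sub_mem hx (hkK hc), hxc⟩, (add_sub_cancel c x).symm⟩
  · rintro ⟨c, hc, m, hm, rfl⟩
    obtain ⟨hmK, hvm⟩ := mem_Mset_iff.1 hm
    exact ⟨⟨c, hc, yValuation_le_one_of_mem_kfld c hc, by rwa [add_sub_cancel_left]⟩,
      add_mem (hkK hc) hmK⟩

theorem mem_Aring_of_valuation_lt_one (hx : x ∈ Kfld k0 r n) (hvx : yValuation k0 r x < 1) :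
    x ∈ Aring k0 r n :=
  ⟨mem_compositeRing_of_valuation_lt_one hvx, hx⟩

theorem inv_mem_Aring (hx : x ∈ Aring k0 r n) (hvx : yValuation k0 r x = 1) :
    x⁻¹ ∈ Aring k0 r n :=
  ⟨inv_mem_compositeRing yValuation_le_one_of_mem_kfld hx.1 hvx, (Kfld k0 r n).inv_mem hx.2⟩

theorem Aring_le_integer : Aring k0 r n ≤ (yValuation k0 r).integer :=
  fun _ hx => valuation_le_one_of_mem_compositeRing hx.1

theorem positiveIdeal_Aring_isMaximal :
    (positiveIdeal (yValuation k0 r) (Aring_le_integer (n := n))).IsMaximal :=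
  positiveIdeal_isMaximal fun _ => inv_mem_Aring

theorem positiveIdeal_Aring_ne_bot :
    positiveIdeal (yValuation k0 r) (Aring_le_integer (n := n)) ≠ ⊥ := fun h => by
  have hY := mem_Aring_of_valuation_lt_one (n := n) (ambY_mem_Kfld (k0 := k0) (r := r))
    yValuation_ambY_lt_one
  have hbot : (⟨_, hY⟩ : Aring k0 r n) = 0 :=
    (Submodule.eq_bot_iff _).1 h _ (mem_positiveIdeal.2 yValuation_ambY_lt_one)
  exact ambY_ne_zero (congrArg Subtype.val hbot)

theorem exists_dvd_pow_of_mem_positiveIdeal_Aring {m a : Aring k0 r n}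
    (hm : m ∈ positiveIdeal (yValuation k0 r) Aring_le_integer) (ha : a ≠ 0) :
    ∃ N, a ∣ m ^ N :=
  exists_dvd_pow_of_mem_positiveIdeal (L := Kfld k0 r n) inf_le_right
    (fun _ => mem_Aring_of_valuation_lt_one) hm ha

end YAdicValuation

section KroneckerTower

variable {k0 : Type} [Field k0] {r n : ℕ} {x : Amb k0 r}

theorem Dset_succ_subset_Aring : ∀ n, Dset k0 r (n + 1) ⊆ Aring k0 r (n + 1)
  | 0 => coe_Aring.ge
  | _ + 1 => fun _ hx => coe_Aring.ge hx.2

theorem exists_isValuationRingOf_of_notMem_Aring (hx : x ∈ Kfld k0 r n)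
    (hxA : x ∉ Aring k0 r n) :
    ∃ W : Subring (Amb k0 r), Aring k0 r n ≤ W ∧ IsValuationRingOf W (Kfld k0 r n) ∧ x ∉ W :=
  exists_isValuationRingOf_notMem kfld_le_Ffld yValuation_le_one_of_mem_Ffld
    yValuation_ambY_lt_one hx fun h => hxA ⟨h, hx⟩

theorem exists_isValuationRingOf_of_notMem_Dset (hx : x ∈ Kfld k0 r (n + 1))
    (hxD : x ∉ Dset k0 r (n + 1)) :
    ∃ W : Subring (Amb k0 r), Dset k0 r (n + 1) ⊆ W ∧
      IsValuationRingOf W (Kfld k0 r (n + 1)) ∧ x ∉ W := by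
  by_cases hxA : x ∈ Aring k0 r (n + 1)
  · cases n with
    | zero => exact absurd (coe_Aring.le hxA) hxD
    | succ n =>
      have hxB : x ∉ krSet k0 r (Dset k0 r (n + 1)) (Kfld k0 r (n + 1)) (ambX' k0 r (n + 2)) :=
        fun h => hxD ⟨h, coe_Aring.le hxA⟩
      rw [mem_krSet_iff] at hxB
      push Not at hxB
      obtain ⟨W, hDW, hW, hxW⟩ := hxB
      refine ⟨nagataRing W (ambX' k0 r (n + 2)) ⊓ (Kfld k0 r (n + 2)).toSubring, ?_,
        .of_inf fun y hy => hW.mem_or_inv_mem_nagataRing (by rwa [← Kfld_succ]),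
        fun h => hxW h.1⟩
      exact fun y hy => ⟨mem_krSet_iff.1 hy.1 W hDW hW, (Dset_succ_subset_Aring _ hy).2⟩
  · obtain ⟨W, hAW, hW, hxW⟩ := exists_isValuationRingOf_of_notMem_Aring hx hxA
    exact ⟨W, (Dset_succ_subset_Aring n).trans hAW, hW, hxW⟩

theorem mem_krSet_iff_mem_Dset (hx : x ∈ Kfld k0 r (n + 1)) :
    x ∈ krSet k0 r (Dset k0 r (n + 1)) (Kfld k0 r (n + 1)) (ambX' k0 r (n + 2)) ↔
      x ∈ Dset k0 r (n + 1) := by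
  rw [mem_krSet_iff]
  constructor
  · intro h
    by_contra hxD
    obtain ⟨W, hDW, hW, hxW⟩ := exists_isValuationRingOf_of_notMem_Dset hx hxD
    exact hxW (hW.mem_of_mem_nagataRing (transcendental_ambX' (n + 1).lt_succ_self) hx (h W hDW hW))
  · exact fun hxD W hDW _ => algebraMap_mem_nagataRing (⟨x, hDW hxD⟩ : W)

theorem MMset_inter_Kfld :
    MMset k0 r (n + 2) ∩ Kfld k0 r (n + 1) = MMset k0 r (n + 1) := by
  ext x
  constructor
  · rintro ⟨⟨hxM, hxB, -⟩, hx⟩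
    exact ⟨mem_Mset_iff.2 ⟨hx, (mem_Mset_iff.1 hxM).2⟩, (mem_krSet_iff_mem_Dset hx).1 hxB⟩
  · rintro ⟨hxM, hxD⟩
    obtain ⟨hx, hvx⟩ := mem_Mset_iff.1 hxM
    have hx' : x ∈ Kfld k0 r (n + 2) := Kfld_mono (n + 1).le_succ hx
    exact ⟨⟨mem_Mset_iff.2 ⟨hx', hvx⟩, (mem_krSet_iff_mem_Dset hx).2 hxD,
      coe_Aring.le (mem_Aring_of_valuation_lt_one hx' hvx)⟩, hx⟩

theorem exists_mem_Dset_valuation_sub_one_lt_one (hx : x ∈ Aring k0 r (n + 2)) :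
    ∃ e ∈ Dset k0 r (n + 2), yValuation k0 r (e - 1) < 1 ∧ x * e ∈ Dset k0 r (n + 2) := by
  set T := ambX' k0 r (n + 2)
  have hxK : x ∈ Kfld k0 r (n + 2) := hx.2
  obtain ⟨f, g, hfg⟩ : ∃ f g : (Kfld k0 r (n + 1))[X], x = aeval T f / aeval T g :=
    mem_subfieldClosure_union_singleton.1 (by rwa [← Kfld_succ])
  set N := f.natDegree + 1
  have hT : T ∈ Kfld k0 r (n + 2) :=
    Kfld_succ (k0 := k0) (r := r) (n + 1) ▸ Subfield.subset_closure (Or.inr rfl)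
  have hvT : 1 < yValuation k0 r T := one_lt_yValuation_ambX' (by omega)
  have hvxT : yValuation k0 r (1 + x / T ^ N - 1) < 1 := by
    rw [add_sub_cancel_left, map_div₀, map_pow]
    have hvTN : 1 < yValuation k0 r T ^ N := one_lt_pow₀ hvT (Nat.succ_ne_zero _)
    exact (div_lt_one₀ (zero_lt_one.trans hvTN)).2 ((Aring_le_integer hx).trans_lt hvTN)
  have hve : yValuation k0 r ((1 + x / T ^ N)⁻¹ - 1) < 1 := by
    simpa only [inv_one] using valuation_inv_sub_inv_lt_one (map_one _) hvxT
  have heK : (1 + x / T ^ N)⁻¹ ∈ Kfld k0 r (n + 2) :=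
    inv_mem (add_mem (one_mem _) (div_mem hxK (pow_mem hT N)))
  have heA : (1 + x / T ^ N)⁻¹ ∈ Aring k0 r (n + 2) := by
    simpa only [sub_add_cancel] using add_mem
      (mem_Aring_of_valuation_lt_one (sub_mem heK (one_mem _)) hve) (one_mem _)
  have hB (W : Subring (Amb k0 r)) (hW : IsValuationRingOf W (Kfld k0 r (n + 1))) :=
    hW.inv_one_add_div_pow_mem_nagataRing (transcendental_ambX' (n + 1).lt_succ_self) hfg
      (Nat.lt_succ_self f.natDegree)
  exact ⟨_, ⟨mem_krSet_iff.2 fun W _ hW => (hB W hW).1, coe_Aring.le heA⟩, hve,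
    mem_krSet_iff.2 fun W _ hW => (hB W hW).2, coe_Aring.le (mul_mem hx heA)⟩

variable {D : Subring (Amb k0 r)}

theorem le_Aring_of_coe_eq_Dset (hD : (D : Set (Amb k0 r)) = Dset k0 r (n + 2)) :
    D ≤ Aring k0 r (n + 2) :=
  hD.le.trans (Dset_succ_subset_Aring (n + 1))

theorem hasUnitDenominators_inclusion_Aring
    (hD : (D : Set (Amb k0 r)) = Dset k0 r (n + 2)) :
    HasUnitDenominators (Subring.inclusion (le_Aring_of_coe_eq_Dset hD))
      (positiveIdeal (yValuation k0 r) Aring_le_integer) := fun a => by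
  obtain ⟨e, heD, hve, hae⟩ := exists_mem_Dset_valuation_sub_one_lt_one a.2
  exact ⟨⟨_, hD.ge hae⟩, ⟨e, hD.ge heD⟩, hve, rfl⟩

theorem eq_comap_positiveIdeal_of_image_eq_MMset
    (hD : (D : Set (Amb k0 r)) = Dset k0 r (n + 2)) {I : Ideal D}
    (hI : Subtype.val '' (I : Set D) = MMset k0 r (n + 2)) :
    I = (positiveIdeal (yValuation k0 r) Aring_le_integer).comap
      (Subring.inclusion (le_Aring_of_coe_eq_Dset hD)) := by
  ext d
  rw [← SetLike.mem_coe, ← Subtype.val_injective.mem_set_image, hI, Ideal.mem_comap,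
    mem_positiveIdeal]
  have hdK := (le_Aring_of_coe_eq_Dset hD d.2).2
  exact ⟨fun h => (mem_Mset_iff.1 h.1).2, fun h => ⟨mem_Mset_iff.2 ⟨hdK, h⟩, hD.le d.2⟩⟩

theorem isMaximal_and_height_one_of_image_eq_MMset
    (hD : (D : Set (Amb k0 r)) = Dset k0 r (n + 2)) {I : Ideal D}
    (hI : Subtype.val '' (I : Set D) = MMset k0 r (n + 2)) :
    I.IsMaximal ∧ I ≠ ⊥ ∧ ∀ Q : Ideal D, Q.IsPrime → Q < I → Q = ⊥ := by
  obtain rfl := eq_comap_positiveIdeal_of_image_eq_MMset hD hI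
  have hdenom := hasUnitDenominators_inclusion_Aring hD
  have hmax := positiveIdeal_Aring_isMaximal (k0 := k0) (r := r) (n := n + 2)
  refine ⟨hdenom.comap_isMaximal, ?_, ?_⟩
  · exact hdenom.comap_ne_bot hmax.ne_top positiveIdeal_Aring_ne_bot
  · intro Q hQ hlt
    exact hdenom.eq_bot_of_lt_comap (Subring.inclusion_injective _) hmax.ne_top
      (fun _ hm _ ha => exists_dvd_pow_of_mem_positiveIdeal_Aring hm ha) hQ hlt

end KroneckerTower

end Tower

/-- In the tower construction, for every `n ≥ 2`, `𝓜ₙ := Mₙ ∩ Dₙ` is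
a height-one maximal ideal of `Dₙ`, and `𝓜ₙ ∩ K_{n-1} = 𝓜_{n-1}`. -/
theorem tower_MM_heightOne_maximal
    (k0 : Type) [Field k0] (r : ℕ) (hr : 2 ≤ r) (n : ℕ) (hn : 2 ≤ n) :
    (∀ D' : Subring (Amb k0 r), (D' : Set (Amb k0 r)) = Dset k0 r n →
      ∀ I : Ideal ↥D', Subtype.val '' (I : Set ↥D') = MMset k0 r n →
        I.IsMaximal ∧ I ≠ ⊥ ∧
        ∀ Q : Ideal ↥D', Q.IsPrime → Q < I → Q = ⊥) ∧
    MMset k0 r n ∩ (Kfld k0 r (n - 1) : Set (Amb k0 r)) = MMset k0 r (n - 1) := by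
  obtain ⟨n, rfl⟩ : ∃ m, n = m + 2 := ⟨n - 2, by omega⟩
  exact ⟨fun _ hD _ hI => Tower.isMaximal_and_height_one_of_image_eq_MMset hD hI,
    Tower.MMset_inter_Kfld⟩
end
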